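/- arXiv:1805.08562 — 2 statements merged into one kernel-verified Lean document; each statement's English description precedes it below -/
import Mathlib

section
/- (Theorem 1, part 2: stochastic bound) Fix δ ∈ (0,1]. Suppose (X_t,Y_t)_{t≥1} satisfies the d-th order stochastic condition with parameter β* > 1/2, and let α_{d-1,d} = (π*_{d-1} − π*_d)/2 and α* = min{α_{d-1,d}, 2β*−1}. Then ContextTreeAdaHedge(D) run with the prior g_prop(h) = 2^{-2^{h+1}} satisfies, with probability at least 1−δ, R_{T,d} = O( 2^{2d} ( (d²/α²_{d-1,d}) ln(d/(α²_{d-1,d} δ)) + (D·d/(α*)²) ln(D/(α* δ)) ) ). -/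
open Finset MeasureTheory

noncomputable section

namespace CTAH

/-- Truncation of a context in `{0,1}^D` to its sub-context of length `h`
(the "last `h` coordinates", reindexed as the first `h` coordinates). -/
def trunc {D : ℕ} (h : ℕ) (x : Fin D → Bool) : Fin h → Bool :=
  fun i => if hi : (i : ℕ) < D then x ⟨i, hi⟩ else false

/-- The order of a tree expert `f ∈ F_D`: the least `e` such that `f`
factors through the length-`e` sub-context. -/
def order {D : ℕ} (f : (Fin D → Bool) → Bool) : ℕ :=
  sInf {e | ∃ f' : (Fin e → Bool) → Bool, ∀ x : Fin D → Bool, f x = f' (trunc e x)}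

variable {D : ℕ}

/-- Cumulative 0-1 loss `L_{t,f}` of an order-`h` class tree expert through round `t`. -/
def Lexp (X : ℕ → Fin D → Bool) (Y : ℕ → Bool) (h : ℕ)
    (f : (Fin h → Bool) → Bool) (t : ℕ) : ℝ :=
  ∑ s ∈ Finset.Icc 1 t, if Y s ≠ f (trunc h (X s)) then 1 else 0

/-- Loss `L*_{t,d}` of the best `d`-th order tree expert in hindsight. -/
def Lstar (X : ℕ → Fin D → Bool) (Y : ℕ → Bool) (d t : ℕ) : ℝ :=
  ⨅ f : (Fin d → Bool) → Bool, Lexp X Y d f t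

/-- Unnormalized prior weight put on a tree expert by the prior function `g`:
`∑_{h = order f}^{D} g h`. -/
def pri (D : ℕ) (g : ℕ → ℝ) (f : (Fin D → Bool) → Bool) : ℝ :=
  ∑ h ∈ Finset.Icc (order f) D, g h

/-- Normalizing factor `Z(g) = ∑_{h=0}^{D} 2^{2^h} g(h)`. -/
def Zfun (D : ℕ) (g : ℕ → ℝ) : ℝ :=
  ∑ h ∈ Finset.range (D + 1), 2 ^ 2 ^ h * g h

/-- Loss vector entry at round `t` for predicting `y`. -/
def lossv (Y : ℕ → Bool) (t : ℕ) (y : Bool) : ℝ := if Y t ≠ y then 1 else 0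

/-- Prediction distribution on `{0,1}` induced by the exponential-weights
distribution over tree experts with prior `g` and learning rate `η`. -/
def wpred (g : ℕ → ℝ) (X : ℕ → Fin D → Bool) (Y : ℕ → Bool)
    (η : ℝ) (t : ℕ) (y : Bool) : ℝ :=
  (∑ f : (Fin D → Bool) → Bool,
      if f (X t) = y then pri D g f * Real.exp (-η * Lexp X Y D f t) else 0) /
  (∑ f : (Fin D → Bool) → Bool, pri D g f * Real.exp (-η * Lexp X Y D f t))

/-- Expected loss `⟨w_t, l_t⟩` of the algorithm at round `t`. -/
def algLoss (g : ℕ → ℝ) (X : ℕ → Fin D → Bool) (Y : ℕ → Bool) (η : ℝ) (t : ℕ) : ℝ :=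
  ∑ y : Bool, wpred g X Y η t y * lossv Y t y

/-- Mixability gap at round `t` for learning rate `η`:
`⟨w_t,l_t⟩ + (1/η) ln ⟨w_t, e^{-η l_t}⟩`. -/
def mixgap (g : ℕ → ℝ) (X : ℕ → Fin D → Bool) (Y : ℕ → Bool) (η : ℝ) (t : ℕ) : ℝ :=
  algLoss g X Y η t +
    (1 / η) * Real.log (∑ y : Bool, wpred g X Y η t y * Real.exp (-η * lossv Y t y))

/-- Cumulative mixability gap `Δ_t` of AdaHedge, defined recursively together with
the AdaHedge learning rate `η_t = (ln 2)/Δ_{t-1}`. -/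
def Delta (g : ℕ → ℝ) (X : ℕ → Fin D → Bool) (Y : ℕ → Bool) : ℕ → ℝ
  | 0 => 0
  | t + 1 => Delta g X Y t + mixgap g X Y (Real.log 2 / Delta g X Y t) (t + 1)

/-- The AdaHedge learning rate `η_t = (ln 2)/Δ_{t-1}`. -/
def eta (g : ℕ → ℝ) (X : ℕ → Fin D → Bool) (Y : ℕ → Bool) (t : ℕ) : ℝ :=
  Real.log 2 / Delta g X Y (t - 1)

/-- The mixability gap `δ_t` at round `t`, at the AdaHedge learning rate. -/
def delta (g : ℕ → ℝ) (X : ℕ → Fin D → Bool) (Y : ℕ → Bool) (t : ℕ) : ℝ :=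
  mixgap g X Y (eta g X Y t) t

/-- Variance `v_t = Var_{K ~ w_t}[l_{t,K}]` of the algorithm's loss at round `t`. -/
def varLoss (g : ℕ → ℝ) (X : ℕ → Fin D → Bool) (Y : ℕ → Bool) (η : ℝ) (t : ℕ) : ℝ :=
  ∑ y : Bool, wpred g X Y η t y * (lossv Y t y - algLoss g X Y η t) ^ 2

/-- Cumulative variance `V_{T₀}^{T} = ∑_{t=T₀}^{T} v_t`. -/
def Vwin (g : ℕ → ℝ) (X : ℕ → Fin D → Bool) (Y : ℕ → Bool) (T₀ T : ℕ) : ℝ :=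
  ∑ t ∈ Finset.Icc T₀ T, varLoss g X Y (eta g X Y t) t

/-- Cumulative mixability gap `Δ_{T₀}^{T} = ∑_{t=T₀}^{T} δ_t`. -/
def Dwin (g : ℕ → ℝ) (X : ℕ → Fin D → Bool) (Y : ℕ → Bool) (T₀ T : ℕ) : ℝ :=
  ∑ t ∈ Finset.Icc T₀ T, delta g X Y t

/-- Expected regret `R_{T,d}` of ContextTreeAdaHedge(D) with prior `g` with respect to
the best `d`-th order tree expert. -/
def regret (g : ℕ → ℝ) (X : ℕ → Fin D → Bool) (Y : ℕ → Bool) (d T : ℕ) : ℝ :=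
  (∑ t ∈ Finset.Icc 1 T, algLoss g X Y (eta g X Y t) t) - Lstar X Y d T

/-- The model-order-proportional prior function `g_prop(h) = 2^{-2^{h+1}}`. -/
def gprop (h : ℕ) : ℝ := (2 : ℝ) ^ (-(2 : ℤ) ^ (h + 1))


/-- Joint probability that the length-`h` sub-context equals `xh` and the label equals
`y`, under the `d`-th order stochastic model `(Q, P*)`. -/
def jointP {D : ℕ} (d : ℕ) (Q : (Fin D → Bool) → ℝ) (Pc : (Fin d → Bool) → Bool → ℝ)
    (h : ℕ) (xh : Fin h → Bool) (y : Bool) : ℝ :=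
  ∑ x : Fin D → Bool, if trunc h x = xh then Q x * Pc (trunc d x) y else 0

/-- Asymptotic unpredictability under the `h`-th order predictive model:
`π*_h = ∑_{x(h)} Q*_h(x(h)) (1 − max_y P*(y | x(h)))`
(equivalently `∑_{x(h)} min_y Pr[X(h) = x(h), Y ≠ y]`). -/
def pistar {D : ℕ} (d : ℕ) (Q : (Fin D → Bool) → ℝ) (Pc : (Fin d → Bool) → Bool → ℝ)
    (h : ℕ) : ℝ :=
  ∑ xh : Fin h → Bool, min (jointP d Q Pc h xh false) (jointP d Q Pc h xh true)


/-! ### Scalar lemmas -/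

lemma exp_mix_le (p η : ℝ) (h0 : 0 ≤ p) (h1 : p ≤ 1) :
    Real.exp (η * p) ≤ (1 - p) + p * Real.exp η := by
  have := convexOn_exp.2 (Set.mem_univ (0:ℝ)) (Set.mem_univ η) (by linarith : 0 ≤ 1 - p) h0 (by ring)
  simp only [smul_eq_mul, mul_zero, zero_add, Real.exp_zero, mul_one] at this
  rwa [mul_comm p η] at this

lemma log_mix_ge (p η : ℝ) (h0 : 0 ≤ p) (h1 : p ≤ 1) :
    η * p ≤ Real.log ((1 - p) + p * Real.exp η) := by
  rw [Real.le_log_iff_exp_le]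
  · exact exp_mix_le p η h0 h1
  · exact lt_of_lt_of_le (Real.exp_pos _) (exp_mix_le p η h0 h1)

lemma mix_pos (p η : ℝ) (h0 : 0 ≤ p) (h1 : p ≤ 1) : 0 < (1 - p) + p * Real.exp η :=
  lt_of_lt_of_le (Real.exp_pos _) (exp_mix_le p η h0 h1)

lemma mg_nonneg (p η : ℝ) (h0 : 0 ≤ p) (h1 : p ≤ 1) (hη : 0 < η) :
    0 ≤ p + (1 / η) * Real.log ((1 - p) + p * Real.exp (-η)) := by
  have h := log_mix_ge p (-η) h0 h1
  have : (1 / η) * (-η * p) ≤ (1 / η) * Real.log ((1 - p) + p * Real.exp (-η)) :=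
    mul_le_mul_of_nonneg_left h (by positivity)
  have e : (1 / η) * (-η * p) = -p := by field_simp
  linarith

lemma mg_le_p (p η : ℝ) (h0 : 0 ≤ p) (h1 : p ≤ 1) (hη : 0 < η) :
    p + (1 / η) * Real.log ((1 - p) + p * Real.exp (-η)) ≤ p := by
  have h := mix_pos p (-η) h0 h1
  have h2 : Real.exp (-η) ≤ 1 := Real.exp_le_one_iff.2 (by linarith)
  have : Real.log ((1 - p) + p * Real.exp (-η)) ≤ 0 :=
    Real.log_nonpos h.le (by nlinarith)
  have : (1 / η) * Real.log ((1 - p) + p * Real.exp (-η)) ≤ 0 :=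
    mul_nonpos_of_nonneg_of_nonpos (by positivity) this
  linarith

lemma exp_quad (x : ℝ) (hx : |x| ≤ 1) : Real.exp x ≤ 1 + x + x ^ 2 := by
  have := Real.abs_exp_sub_one_sub_id_le hx
  have := (abs_le.1 this).2
  linarith

lemma mg_le_eta (p η : ℝ) (h0 : 0 ≤ p) (h1 : p ≤ 1) (hη : 0 < η) (hη1 : η ≤ 1) :
    p + (1 / η) * Real.log ((1 - p) + p * Real.exp (-η)) ≤ η * p := by
  have h := mix_pos p (-η) h0 h1
  have h2 := exp_quad (-η) (by rw [abs_neg, abs_of_pos hη]; exact hη1)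
  have h3 := Real.log_le_sub_one_of_pos h
  have h4 : Real.log ((1 - p) + p * Real.exp (-η)) ≤ p * (-η + η ^ 2) := by nlinarith
  have : (1 / η) * Real.log ((1 - p) + p * Real.exp (-η)) ≤ (1 / η) * (p * (-η + η ^ 2)) :=
    mul_le_mul_of_nonneg_left h4 (by positivity)
  have e : (1 / η) * (p * (-η + η ^ 2)) = -p + η * p := by field_simp
  linarith

lemma mg_le_eta' (p η : ℝ) (h0 : 0 ≤ p) (h1 : p ≤ 1) (hη : 0 < η) (hη1 : η ≤ 1) :
    p + (1 / η) * Real.log ((1 - p) + p * Real.exp (-η)) ≤ η * (1 - p) := by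
  have h := mix_pos (1 - p) η (by linarith) (by linarith)
  have h2 := exp_quad η (by rw [abs_of_pos hη]; exact hη1)
  have h3 := Real.log_le_sub_one_of_pos h
  have e0 : (1 - p) + p * Real.exp (-η) = Real.exp (-η) * ((1 - (1 - p)) + (1 - p) * Real.exp η) := by
    have : Real.exp (-η) * Real.exp η = 1 := by rw [← Real.exp_add]; simp
    linear_combination (p - 1) * this
  have e1 : Real.log ((1 - p) + p * Real.exp (-η)) =
      -η + Real.log ((1 - (1 - p)) + (1 - p) * Real.exp η) := by
    rw [e0, Real.log_mul (Real.exp_pos _).ne' h.ne', Real.log_exp]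
  have h4 : Real.log ((1 - p) + p * Real.exp (-η)) ≤ -η + (1 - p) * (η + η ^ 2) := by
    rw [e1]; nlinarith
  have : (1 / η) * Real.log ((1 - p) + p * Real.exp (-η)) ≤ (1 / η) * (-η + (1 - p) * (η + η ^ 2)) :=
    mul_le_mul_of_nonneg_left h4 (by positivity)
  have e : (1 / η) * (-η + (1 - p) * (η + η ^ 2)) = -1 + (1 - p) * (1 + η) := by field_simp
  linarith

/-! ### Structure of the prior -/

lemma gprop_eq (h : ℕ) : gprop h = (1 / 4 : ℝ) ^ (2 ^ h) := by
  unfold gprop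
  have : ((2 : ℤ) ^ (h + 1)) = ((2 * 2 ^ h : ℕ) : ℤ) := by push_cast; ring
  rw [this, zpow_neg, zpow_natCast, pow_mul, ← inv_pow]
  norm_num

lemma gprop_pos (h : ℕ) : 0 < gprop h := by rw [gprop_eq]; positivity

lemma sum_gprop_le (n : ℕ) : ∑ h ∈ Finset.range n, gprop h * 2 ^ 2 ^ h ≤ 1 := by
  have h1 : ∀ h : ℕ, gprop h * 2 ^ 2 ^ h ≤ (1 / 2 : ℝ) ^ (h + 1) := by
    intro h
    rw [gprop_eq, ← mul_pow]
    norm_num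
    exact pow_le_pow_of_le_one (by norm_num) (by norm_num) (Nat.succ_le_of_lt Nat.lt_two_pow_self)
  have h2 : ∑ h ∈ Finset.range n, gprop h * 2 ^ 2 ^ h ≤ 1 - (1 / 2 : ℝ) ^ n := by
    induction n with
    | zero => simp
    | succ n ih =>
      rw [Finset.sum_range_succ]
      have := h1 n
      rw [pow_succ] at this ⊢
      linarith
  have : (0:ℝ) < (1 / 2 : ℝ) ^ n := by positivity
  linarith

lemma trunc_self (x : Fin D → Bool) : trunc D x = x := by
  funext i; simp [trunc]

lemma trunc_trunc {e h : ℕ} (heh : e ≤ h) (x : Fin D → Bool) :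
    trunc e (trunc h x) = trunc e x := by
  funext i
  have : (i : ℕ) < h := lt_of_lt_of_le i.2 heh
  simp [trunc, this]

lemma trunc_surj {h : ℕ} (hD : h ≤ D) (z : Fin h → Bool) : ∃ x : Fin D → Bool, trunc h x = z := by
  refine ⟨trunc D z, ?_⟩
  rw [trunc_trunc hD, trunc_self]

lemma order_le_iff {h : ℕ} (hD : h ≤ D) (f : (Fin D → Bool) → Bool) :
    order f ≤ h ↔ ∃ f' : (Fin h → Bool) → Bool, (fun x => f' (trunc h x)) = f := by
  constructor
  · intro hle
    have hne : ({e | ∃ f' : (Fin e → Bool) → Bool, ∀ x : Fin D → Bool, f x = f' (trunc e x)}).Nonempty :=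
      ⟨D, f, fun x => by rw [trunc_self]⟩
    obtain ⟨f', hf'⟩ := Nat.sInf_mem hne
    refine ⟨fun z => f' (trunc _ z), ?_⟩
    funext x
    rw [hf' x]
    exact congrArg f' (trunc_trunc hle x)
  · rintro ⟨f', rfl⟩
    exact Nat.sInf_le ⟨f', fun x => rfl⟩

lemma sum_order_le {h : ℕ} (hD : h ≤ D) (F : ((Fin D → Bool) → Bool) → ℝ) :
    ∑ f : (Fin D → Bool) → Bool, (if order f ≤ h then F f else 0) =
      ∑ f' : (Fin h → Bool) → Bool, F (fun x => f' (trunc h x)) := by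
  classical
  rw [← Finset.sum_filter]
  have himg : Finset.univ.filter (fun f : (Fin D → Bool) → Bool => order f ≤ h) =
      Finset.univ.image (fun (f' : (Fin h → Bool) → Bool) (x : Fin D → Bool) => f' (trunc h x)) := by
    ext f
    simp [order_le_iff hD]
  rw [himg, Finset.sum_image]
  intro a _ b _ hab
  funext z
  obtain ⟨x, rfl⟩ := trunc_surj hD z
  exact congrFun hab x

lemma pri_eq (g : ℕ → ℝ) (f : (Fin D → Bool) → Bool) :
    pri D g f = ∑ h ∈ Finset.range (D + 1), if order f ≤ h then g h else 0 := by
  unfold pri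
  rw [← Finset.sum_filter]
  apply Finset.sum_congr _ (fun _ _ => rfl)
  ext h
  simp [Finset.mem_Icc]
  omega

lemma pri_sum (g : ℕ → ℝ) (F : ((Fin D → Bool) → Bool) → ℝ) :
    ∑ f : (Fin D → Bool) → Bool, pri D g f * F f =
      ∑ h ∈ Finset.range (D + 1), g h * ∑ f' : (Fin h → Bool) → Bool, F (fun x => f' (trunc h x)) := by
  simp_rw [pri_eq, Finset.sum_mul]
  rw [Finset.sum_comm]
  apply Finset.sum_congr rfl
  intro h hh
  rw [← sum_order_le (by simpa [Nat.lt_succ_iff] using hh), Finset.mul_sum]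
  apply Finset.sum_congr rfl
  intro f _
  split_ifs <;> simp

lemma pri_ge {h : ℕ} (hD : h ≤ D) (f : (Fin D → Bool) → Bool) (hf : order f ≤ h) :
    gprop h ≤ pri D gprop f := by
  unfold pri
  exact Finset.single_le_sum (f := gprop) (fun i _ => (gprop_pos i).le) (Finset.mem_Icc.2 ⟨hf, hD⟩)

lemma order_le (f : (Fin D → Bool) → Bool) : order f ≤ D :=
  (order_le_iff le_rfl f).2 ⟨f, by funext x; rw [trunc_self]⟩

lemma pri_pos (f : (Fin D → Bool) → Bool) : 0 < pri D gprop f :=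
  lt_of_lt_of_le (gprop_pos D) (pri_ge le_rfl f (order_le f))

lemma pri_total : ∑ f : (Fin D → Bool) → Bool, pri D gprop f ≤ 1 := by
  have := pri_sum (D := D) gprop (fun _ => 1)
  simp only [mul_one, Finset.sum_const, Finset.card_univ, nsmul_eq_mul] at this
  rw [this]
  simpa using sum_gprop_le (D + 1)

lemma Lexp_lift {h : ℕ} (X : ℕ → Fin D → Bool) (Y : ℕ → Bool) (f' : (Fin h → Bool) → Bool) (t : ℕ) :
    Lexp X Y D (fun x => f' (trunc h x)) t = Lexp X Y h f' t := by
  simp [Lexp, trunc_self]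

lemma Lexp_lift' {h e : ℕ} (hhe : h ≤ e) (X : ℕ → Fin D → Bool) (Y : ℕ → Bool)
    (f' : (Fin h → Bool) → Bool) (t : ℕ) :
    Lexp X Y e (fun x => f' (trunc h x)) t = Lexp X Y h f' t := by
  simp [Lexp, trunc_trunc hhe]

lemma Lexp_nonneg {h : ℕ} (X : ℕ → Fin D → Bool) (Y : ℕ → Bool) (f' : (Fin h → Bool) → Bool) (t : ℕ) :
    0 ≤ Lexp X Y h f' t := by
  unfold Lexp
  exact Finset.sum_nonneg fun i _ => by split_ifs <;> norm_num

lemma Lexp_succ {h : ℕ} (X : ℕ → Fin D → Bool) (Y : ℕ → Bool) (f' : (Fin h → Bool) → Bool) (t : ℕ) :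
    Lexp X Y h f' (t + 1) = Lexp X Y h f' t + if Y (t+1) ≠ f' (trunc h (X (t+1))) then 1 else 0 := by
  unfold Lexp
  rw [Finset.sum_Icc_succ_top (by omega)]

/-! ### The partition function -/

/-- Partition function. -/
def ZZ (X : ℕ → Fin D → Bool) (Y : ℕ → Bool) (η : ℝ) (t : ℕ) : ℝ :=
  ∑ f : (Fin D → Bool) → Bool, pri D gprop f * Real.exp (-η * Lexp X Y D f t)

lemma ZZ_pos (X : ℕ → Fin D → Bool) (Y : ℕ → Bool) (η : ℝ) (t : ℕ) : 0 < ZZ X Y η t :=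
  Finset.sum_pos (fun f _ => mul_pos (pri_pos f) (Real.exp_pos _)) Finset.univ_nonempty

lemma ZZ_le_one (X : ℕ → Fin D → Bool) (Y : ℕ → Bool) (η : ℝ) (hη : 0 ≤ η) (t : ℕ) :
    ZZ X Y η t ≤ 1 := by
  refine le_trans (Finset.sum_le_sum fun f _ => ?_) pri_total
  have : Real.exp (-η * Lexp X Y D f t) ≤ 1 := by
    rw [Real.exp_le_one_iff]
    have := Lexp_nonneg X Y f t
    nlinarith
  have h2 := pri_pos f
  nlinarith

lemma wpred_nonneg (X : ℕ → Fin D → Bool) (Y : ℕ → Bool) (η : ℝ) (t : ℕ) (y : Bool) :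
    0 ≤ wpred gprop X Y η t y := by
  unfold wpred
  apply div_nonneg
  · exact Finset.sum_nonneg fun f _ => by
      split_ifs
      · exact (mul_pos (pri_pos f) (Real.exp_pos _)).le
      · exact le_rfl
  · exact (ZZ_pos X Y η t).le

lemma wpred_pos (X : ℕ → Fin D → Bool) (Y : ℕ → Bool) (η : ℝ) (t : ℕ) (y : Bool) :
    0 < wpred gprop X Y η t y := by
  unfold wpred
  apply div_pos
  · apply Finset.sum_pos'
    · exact fun f _ => by
        split_ifs
        · exact (mul_pos (pri_pos f) (Real.exp_pos _)).le
        · exact le_rfl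
    · refine ⟨fun _ => y, Finset.mem_univ _, ?_⟩
      simp only [if_true]
      exact mul_pos (pri_pos _) (Real.exp_pos _)
  · exact ZZ_pos X Y η t

lemma wpred_add (X : ℕ → Fin D → Bool) (Y : ℕ → Bool) (η : ℝ) (t : ℕ) (y : Bool) :
    wpred gprop X Y η t y + wpred gprop X Y η t (!y) = 1 := by
  have hZ := ZZ_pos X Y η t
  unfold wpred
  rw [← add_div, ← Finset.sum_add_distrib]
  rw [div_eq_one_iff_eq (by exact hZ.ne')]
  apply Finset.sum_congr rfl
  intro f _
  cases hf : f (X t) <;> cases y <;> simp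

lemma wpred_le_one (X : ℕ → Fin D → Bool) (Y : ℕ → Bool) (η : ℝ) (t : ℕ) (y : Bool) :
    wpred gprop X Y η t y ≤ 1 := by
  have := wpred_add X Y η t y
  have := wpred_nonneg X Y η t (!y)
  linarith

lemma algLoss_eq (X : ℕ → Fin D → Bool) (Y : ℕ → Bool) (η : ℝ) (t : ℕ) :
    algLoss gprop X Y η t = wpred gprop X Y η t (!(Y t)) := by
  unfold algLoss lossv
  cases hY : Y t <;> simp

lemma mixgap_eq (X : ℕ → Fin D → Bool) (Y : ℕ → Bool) (η : ℝ) (t : ℕ) :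
    mixgap gprop X Y η t = algLoss gprop X Y η t + (1 / η) *
      Real.log ((1 - algLoss gprop X Y η t) + algLoss gprop X Y η t * Real.exp (-η)) := by
  have h := wpred_add X Y η t (Y t)
  have h' : 1 - wpred gprop X Y η t (!(Y t)) = wpred gprop X Y η t (Y t) := by linarith
  unfold mixgap
  rw [algLoss_eq, h']
  congr 3
  unfold lossv
  cases hY : Y t <;> simp [add_comm]

lemma algLoss_pos (X : ℕ → Fin D → Bool) (Y : ℕ → Bool) (η : ℝ) (t : ℕ) :
    0 < algLoss gprop X Y η t := by rw [algLoss_eq]; exact wpred_pos ..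

lemma algLoss_le_one (X : ℕ → Fin D → Bool) (Y : ℕ → Bool) (η : ℝ) (t : ℕ) :
    algLoss gprop X Y η t ≤ 1 := by rw [algLoss_eq]; exact wpred_le_one ..

lemma mixgap_nonneg (X : ℕ → Fin D → Bool) (Y : ℕ → Bool) (η : ℝ) (hη : 0 ≤ η) (t : ℕ) :
    0 ≤ mixgap gprop X Y η t := by
  rw [mixgap_eq]
  rcases hη.eq_or_lt with h | h
  · rw [← h]; simp [(algLoss_pos X Y 0 t).le]
  · exact mg_nonneg _ _ (algLoss_pos ..).le (algLoss_le_one ..) h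

lemma mixgap_le_one (X : ℕ → Fin D → Bool) (Y : ℕ → Bool) (η : ℝ) (hη : 0 ≤ η) (t : ℕ) :
    mixgap gprop X Y η t ≤ 1 := by
  rw [mixgap_eq]
  refine le_trans ?_ (algLoss_le_one X Y η t)
  rcases hη.eq_or_lt with h | h
  · rw [← h]; simp
  · exact mg_le_p _ _ (algLoss_pos ..).le (algLoss_le_one ..) h

lemma mixgap_le_eta (X : ℕ → Fin D → Bool) (Y : ℕ → Bool) (η : ℝ) (hη : 0 < η) (hη1 : η ≤ 1) (t : ℕ)
    (y : Bool) : mixgap gprop X Y η t ≤ η * wpred gprop X Y η t y := by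
  rw [mixgap_eq]
  by_cases hy : y = Y t
  · have h : wpred gprop X Y η t y = 1 - algLoss gprop X Y η t := by
      rw [algLoss_eq, hy]; linarith [wpred_add X Y η t (Y t)]
    rw [h]
    exact mg_le_eta' _ _ (algLoss_pos ..).le (algLoss_le_one ..) hη hη1
  · have h : wpred gprop X Y η t y = algLoss gprop X Y η t := by
      rw [algLoss_eq]
      congr 1
      cases y <;> cases h : Y t <;> simp_all
    rw [h]
    exact mg_le_eta _ _ (algLoss_pos ..).le (algLoss_le_one ..) hη hη1

lemma Delta_nonneg (X : ℕ → Fin D → Bool) (Y : ℕ → Bool) (t : ℕ) : 0 ≤ Delta gprop X Y t := by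
  induction t with
  | zero => simp [Delta]
  | succ t ih =>
    simp only [Delta]
    have := mixgap_nonneg X Y (Real.log 2 / Delta gprop X Y t)
      (div_nonneg (Real.log_nonneg (by norm_num)) ih) (t + 1)
    linarith

lemma eta_succ (X : ℕ → Fin D → Bool) (Y : ℕ → Bool) (t : ℕ) :
    eta gprop X Y (t + 1) = Real.log 2 / Delta gprop X Y t := rfl

lemma eta_nonneg (X : ℕ → Fin D → Bool) (Y : ℕ → Bool) (t : ℕ) : 0 ≤ eta gprop X Y t :=
  div_nonneg (Real.log_nonneg (by norm_num)) (Delta_nonneg ..)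

lemma Delta_succ (X : ℕ → Fin D → Bool) (Y : ℕ → Bool) (t : ℕ) :
    Delta gprop X Y (t + 1) = Delta gprop X Y t + mixgap gprop X Y (eta gprop X Y (t + 1)) (t + 1) := rfl

lemma Delta_mono (X : ℕ → Fin D → Bool) (Y : ℕ → Bool) : Monotone (Delta gprop X Y) :=
  monotone_nat_of_le_succ fun t => by
    rw [Delta_succ]
    have := mixgap_nonneg X Y (eta gprop X Y (t+1)) (eta_nonneg ..) (t + 1)
    linarith

lemma Delta_one (X : ℕ → Fin D → Bool) (Y : ℕ → Bool) :
    Delta gprop X Y 1 = algLoss gprop X Y (eta gprop X Y 1) 1 := by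
  have h : eta gprop X Y 1 = 0 := by simp [eta, Delta]
  rw [Delta_succ, mixgap_eq]
  simp [h, Delta]

lemma Delta_pos (X : ℕ → Fin D → Bool) (Y : ℕ → Bool) (t : ℕ) (ht : 1 ≤ t) : 0 < Delta gprop X Y t := by
  refine lt_of_lt_of_le ?_ (Delta_mono X Y ht)
  rw [Delta_one]
  exact algLoss_pos ..

lemma eta_pos (X : ℕ → Fin D → Bool) (Y : ℕ → Bool) (t : ℕ) (ht : 1 ≤ t) :
    0 < eta gprop X Y (t + 1) :=
  div_pos (Real.log_pos (by norm_num)) (Delta_pos X Y t ht)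

lemma eta_anti (X : ℕ → Fin D → Bool) (Y : ℕ → Bool) (t : ℕ) (ht : 1 ≤ t) :
    eta gprop X Y (t + 2) ≤ eta gprop X Y (t + 1) :=
  div_le_div_of_nonneg_left (Real.log_nonneg (by norm_num)) (Delta_pos X Y t ht)
    (Delta_mono X Y (Nat.le_succ t))

/-! ### Regret bound in terms of Delta -/

/-- Mix potential. -/
def Phi (X : ℕ → Fin D → Bool) (Y : ℕ → Bool) (η : ℝ) (t : ℕ) : ℝ := -(1 / η) * Real.log (ZZ X Y η t)

lemma Phi_nonneg (X : ℕ → Fin D → Bool) (Y : ℕ → Bool) (η : ℝ) (hη : 0 ≤ η) (t : ℕ) :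
    0 ≤ Phi X Y η t := by
  have h1 := Real.log_nonpos (ZZ_pos X Y η t).le (ZZ_le_one X Y η hη t)
  have h2 : 0 ≤ 1 / η := by positivity
  unfold Phi
  nlinarith

lemma ZZ_step (X : ℕ → Fin D → Bool) (Y : ℕ → Bool) (η : ℝ) (t : ℕ) :
    ZZ X Y η t = ZZ X Y η (t + 1) *
      ((1 - algLoss gprop X Y η (t+1)) + algLoss gprop X Y η (t+1) * Real.exp η) := by
  have hZ := ZZ_pos X Y η (t + 1)
  have h1 : 1 - algLoss gprop X Y η (t+1) = wpred gprop X Y η (t+1) (Y (t+1)) := by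
    rw [algLoss_eq]; linarith [wpred_add X Y η (t+1) (Y (t+1))]
  rw [h1, algLoss_eq]
  have h2 : ∀ y, ZZ X Y η (t+1) * wpred gprop X Y η (t+1) y =
      ∑ f : (Fin D → Bool) → Bool,
        if f (X (t+1)) = y then pri D gprop f * Real.exp (-η * Lexp X Y D f (t+1)) else 0 := by
    intro y
    unfold wpred
    exact mul_div_cancel₀ _ hZ.ne'
  rw [mul_add, ← mul_assoc, h2, h2, Finset.sum_mul, ← Finset.sum_add_distrib]
  unfold ZZ
  apply Finset.sum_congr rfl
  intro f _
  rw [Lexp_succ, trunc_self]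
  by_cases hf : f (X (t+1)) = Y (t+1)
  · simp [hf]
  · have hf' : f (X (t+1)) = !(Y (t+1)) := by
      cases h : Y (t+1) <;> simp_all
    have hne : Y (t+1) ≠ !(Y (t+1)) := by simp
    rw [if_neg hf, if_pos hf', hf', if_pos hne, mul_assoc, ← Real.exp_add]
    ring_nf

lemma algLoss_le_Phi (X : ℕ → Fin D → Bool) (Y : ℕ → Bool) (η : ℝ) (hη : 0 < η) (t : ℕ) :
    algLoss gprop X Y η (t + 1) ≤ Phi X Y η (t + 1) - Phi X Y η t := by
  have hp := algLoss_pos X Y η (t+1)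
  have hp1 := algLoss_le_one X Y η (t+1)
  have h := log_mix_ge _ η hp.le hp1
  have e : Real.log (ZZ X Y η t) = Real.log (ZZ X Y η (t+1)) +
      Real.log ((1 - algLoss gprop X Y η (t+1)) + algLoss gprop X Y η (t+1) * Real.exp η) := by
    conv_lhs => rw [ZZ_step]
    exact Real.log_mul (ZZ_pos ..).ne' (mix_pos _ _ hp.le hp1).ne'
  unfold Phi
  rw [e]
  have : (1 / η) * (η * algLoss gprop X Y η (t+1)) ≤ (1 / η) *
      Real.log ((1 - algLoss gprop X Y η (t+1)) + algLoss gprop X Y η (t+1) * Real.exp η) :=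
    mul_le_mul_of_nonneg_left h (by positivity)
  have e2 : (1 / η) * (η * algLoss gprop X Y η (t+1)) = algLoss gprop X Y η (t+1) := by field_simp
  linarith

lemma Phi_anti (X : ℕ → Fin D → Bool) (Y : ℕ → Bool) (η η' : ℝ) (hη' : 0 < η') (h : η' ≤ η) (t : ℕ) :
    Phi X Y η t ≤ Phi X Y η' t := by
  have hη : 0 < η := lt_of_lt_of_le hη' h
  set P := ∑ f : (Fin D → Bool) → Bool, pri D gprop f with hP
  have hPpos : 0 < P := Finset.sum_pos (fun f _ => pri_pos f) Finset.univ_nonempty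
  have hP1 : P ≤ 1 := pri_total
  have hp : 1 ≤ η / η' := (one_le_div hη').2 h
  have key := Real.rpow_arith_mean_le_arith_mean_rpow Finset.univ
    (fun f : (Fin D → Bool) → Bool => pri D gprop f / P) (fun f => Real.exp (-η' * Lexp X Y D f t))
    (fun f _ => (div_pos (pri_pos f) hPpos).le)
    (by rw [← Finset.sum_div]; exact div_self hPpos.ne')
    (fun f _ => (Real.exp_pos _).le) hp
  have e1 : ∑ f : (Fin D → Bool) → Bool, pri D gprop f / P * Real.exp (-η' * Lexp X Y D f t) =
      ZZ X Y η' t / P := by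
    unfold ZZ; rw [Finset.sum_div]; exact Finset.sum_congr rfl fun f _ => by ring
  have e2 : ∑ f : (Fin D → Bool) → Bool, pri D gprop f / P * Real.exp (-η' * Lexp X Y D f t) ^ (η / η') =
      ZZ X Y η t / P := by
    unfold ZZ; rw [Finset.sum_div]
    refine Finset.sum_congr rfl fun f _ => ?_
    rw [← Real.exp_mul]
    have : -η' * Lexp X Y D f t * (η / η') = -η * Lexp X Y D f t := by field_simp
    rw [this]; ring
  rw [e1, e2] at key
  have hz := ZZ_pos X Y η t
  have hz' := ZZ_pos X Y η' t
  have k2 := Real.log_le_log (Real.rpow_pos_of_pos (div_pos hz' hPpos) _) key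
  rw [Real.log_rpow (div_pos hz' hPpos), Real.log_div hz'.ne' hPpos.ne', Real.log_div hz.ne' hPpos.ne'] at k2
  have hlP : Real.log P ≤ 0 := Real.log_nonpos hPpos.le hP1
  have k3 : η / η' * Real.log (ZZ X Y η' t) ≤ Real.log (ZZ X Y η t) := by nlinarith
  have k4 : (1 / η) * (η / η' * Real.log (ZZ X Y η' t)) ≤ (1 / η) * Real.log (ZZ X Y η t) :=
    mul_le_mul_of_nonneg_left k3 (by positivity)
  have e3 : (1 / η) * (η / η' * Real.log (ZZ X Y η' t)) = (1 / η') * Real.log (ZZ X Y η' t) := by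
    field_simp
  unfold Phi
  linarith

lemma sum_algLoss_le (X : ℕ → Fin D → Bool) (Y : ℕ → Bool) (T : ℕ) :
    ∑ t ∈ Finset.Icc 1 (T + 2), algLoss gprop X Y (eta gprop X Y t) t ≤
      Delta gprop X Y 1 + Phi X Y (eta gprop X Y (T + 2)) (T + 2) := by
  induction T with
  | zero =>
    rw [Finset.sum_Icc_succ_top (by omega), Delta_one]
    have h1 := algLoss_le_Phi X Y (eta gprop X Y 2) (eta_pos X Y 1 le_rfl) 1
    have h2 := Phi_nonneg X Y (eta gprop X Y 2) (eta_nonneg ..) 1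
    simp at h1 h2 ⊢
    linarith
  | succ T ih =>
    rw [Finset.sum_Icc_succ_top (by omega)]
    have h1 := algLoss_le_Phi X Y (eta gprop X Y (T + 3)) (eta_pos X Y (T+2) (by omega)) (T + 2)
    have h2 := Phi_anti X Y (eta gprop X Y (T + 2)) (eta gprop X Y (T + 3))
      (eta_pos X Y (T+2) (by omega)) (eta_anti X Y (T+1) (by omega)) (T + 2)
    have e : T + 1 + 2 = T + 2 + 1 := by omega
    have e' : T + 1 + 1 = T + 2 := by omega
    simp only [e, e'] at *
    linarith

lemma Phi_le {d : ℕ} (hdD : d ≤ D) (X : ℕ → Fin D → Bool) (Y : ℕ → Bool) (f : (Fin d → Bool) → Bool)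
    (η : ℝ) (hη : 0 < η) (t : ℕ) :
    Phi X Y η t ≤ Lexp X Y d f t + (1 / η) * (2 ^ (d + 1) * Real.log 2) := by
  have h1 : gprop d * Real.exp (-η * Lexp X Y d f t) ≤ ZZ X Y η t := by
    have h2 := Finset.single_le_sum (f := fun f : (Fin D → Bool) → Bool =>
      pri D gprop f * Real.exp (-η * Lexp X Y D f t))
      (fun i _ => (mul_pos (pri_pos i) (Real.exp_pos _)).le)
      (Finset.mem_univ (fun x => f (trunc d x)))
    refine le_trans ?_ h2
    simp only [Lexp_lift]
    apply mul_le_mul_of_nonneg_right _ (Real.exp_pos _).le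
    exact pri_ge hdD _ ((order_le_iff hdD _).2 ⟨f, rfl⟩)
  have h3 := Real.log_le_log (mul_pos (gprop_pos d) (Real.exp_pos _)) h1
  rw [Real.log_mul (gprop_pos d).ne' (Real.exp_pos _).ne', Real.log_exp] at h3
  have h4 : Real.log (gprop d) = -(2 ^ (d + 1) * Real.log 2) := by
    unfold gprop
    rw [Real.log_zpow]
    push_cast
    ring
  rw [h4] at h3
  unfold Phi
  have := mul_le_mul_of_nonneg_left h3 (by positivity : 0 ≤ 1 / η)
  have e : (1 / η) * (-(2 ^ (d + 1) * Real.log 2) + -η * Lexp X Y d f t) =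
    - Lexp X Y d f t - (1 / η) * (2 ^ (d + 1) * Real.log 2) := by field_simp; ring
  linarith

lemma Lstar_attained (X : ℕ → Fin D → Bool) (Y : ℕ → Bool) (d t : ℕ) :
    ∃ f : (Fin d → Bool) → Bool, Lexp X Y d f t = Lstar X Y d t :=
  exists_eq_ciInf_of_finite

lemma Lstar_nonneg (X : ℕ → Fin D → Bool) (Y : ℕ → Bool) (d t : ℕ) : 0 ≤ Lstar X Y d t := by
  obtain ⟨f, hf⟩ := Lstar_attained X Y d t
  rw [← hf]; exact Lexp_nonneg ..

lemma regret_le {d : ℕ} (hdD : d ≤ D) (X : ℕ → Fin D → Bool) (Y : ℕ → Bool) (T : ℕ) :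
    regret gprop X Y d T ≤ (1 + 2 ^ (d + 1)) * Delta gprop X Y T := by
  have h2 : (0:ℝ) < 2 ^ (d + 1) := by positivity
  match T with
  | 0 =>
    have := Lstar_nonneg X Y d 0
    simp [regret, Delta, this]
  | 1 =>
    have := Lstar_nonneg X Y d 1
    have h3 := Delta_nonneg X Y 1
    unfold regret
    simp only [Finset.Icc_self, Finset.sum_singleton, ← Delta_one]
    nlinarith
  | T + 2 =>
    obtain ⟨f, hf⟩ := Lstar_attained X Y d (T + 2)
    have h1 := sum_algLoss_le X Y T
    have h3 := Phi_le hdD X Y f (eta gprop X Y (T + 2)) (eta_pos X Y (T+1) (by omega)) (T + 2)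
    have h4 : (1 / eta gprop X Y (T + 2)) * (2 ^ (d + 1) * Real.log 2) = 2 ^ (d + 1) * Delta gprop X Y (T + 1) := by
      have : 0 < Real.log 2 := Real.log_pos (by norm_num)
      have hD := Delta_pos X Y (T + 1) (by omega)
      rw [show eta gprop X Y (T + 2) = Real.log 2 / Delta gprop X Y (T + 1) from rfl]
      field_simp
    have h5 := Delta_mono X Y (show 1 ≤ T + 2 by omega)
    have h6 := Delta_mono X Y (show T + 1 ≤ T + 2 by omega)
    have h7 := mul_le_mul_of_nonneg_left h6 h2.le
    unfold regret
    rw [← hf]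
    linarith

/-! ### Node statistics -/

/-- Gap (bad minus good count) at node `z` of depth `h`. -/
def GG (X : ℕ → Fin D → Bool) (Y : ℕ → Bool) {d : ℕ} (fs : (Fin d → Bool) → Bool) (h : ℕ)
    (z : Fin h → Bool) (t : ℕ) : ℝ :=
  ∑ s ∈ Finset.Icc 1 t, if trunc h (X s) = z then
    (if Y s ≠ fs (trunc d (X s)) then 1 else -1) else 0

/-- Visit count of node `z`. -/
def NN (X : ℕ → Fin D → Bool) (h : ℕ) (z : Fin h → Bool) (t : ℕ) : ℝ :=
  ∑ s ∈ Finset.Icc 1 t, if trunc h (X s) = z then 1 else 0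

lemma Lexp_diff {d h : ℕ} (hdh : d ≤ h) (X : ℕ → Fin D → Bool) (Y : ℕ → Bool)
    (fs : (Fin d → Bool) → Bool) (f : (Fin h → Bool) → Bool) (t : ℕ) :
    Lexp X Y d fs t - Lexp X Y h f t =
      ∑ z : Fin h → Bool, if f z = fs (trunc d z) then 0 else GG X Y fs h z t := by
  unfold Lexp GG
  rw [← Finset.sum_sub_distrib]
  have : ∀ z : Fin h → Bool, (if f z = fs (trunc d z) then (0:ℝ) else
      ∑ s ∈ Finset.Icc 1 t, if trunc h (X s) = z then
        (if Y s ≠ fs (trunc d (X s)) then 1 else -1) else 0) =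
      ∑ s ∈ Finset.Icc 1 t, if trunc h (X s) = z then
        (if f z = fs (trunc d z) then (0:ℝ) else (if Y s ≠ fs (trunc d (X s)) then 1 else -1)) else 0 := by
    intro z
    split_ifs with hz
    · simp
    · rfl
  simp_rw [this]
  rw [Finset.sum_comm]
  apply Finset.sum_congr rfl
  intro s _
  rw [Finset.sum_ite_eq]
  simp only [Finset.mem_univ, if_true, trunc_trunc hdh]
  cases f (trunc h (X s)) <;> cases fs (trunc d (X s)) <;> cases Y s <;> simp

lemma exp_Lexp {d h : ℕ} (hdh : d ≤ h) (X : ℕ → Fin D → Bool) (Y : ℕ → Bool)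
    (fs : (Fin d → Bool) → Bool) (f : (Fin h → Bool) → Bool) (η : ℝ) (t : ℕ) :
    Real.exp (-η * Lexp X Y h f t) = Real.exp (-η * Lexp X Y d fs t) *
      ∏ z : Fin h → Bool, if f z = fs (trunc d z) then 1 else Real.exp (η * GG X Y fs h z t) := by
  have h1 := Lexp_diff hdh X Y fs f t
  have h2 : -η * Lexp X Y h f t = -η * Lexp X Y d fs t +
      ∑ z : Fin h → Bool, η * (if f z = fs (trunc d z) then 0 else GG X Y fs h z t) := by
    rw [← Finset.mul_sum, ← h1]; ring
  rw [h2, Real.exp_add, Real.exp_sum]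
  congr 1
  apply Finset.prod_congr rfl
  intro z _
  split_ifs <;> simp

lemma sum_prod_bool {ι : Type*} [Fintype ι] [DecidableEq ι] (a : ι → Bool → ℝ) :
    ∑ f : ι → Bool, ∏ z, a z (f z) = ∏ z, ∑ y : Bool, a z y := by
  rw [Finset.prod_univ_sum, Fintype.piFinset_univ]

lemma sum_bool_sel (b : Bool) (F : Bool → ℝ) : ∑ y : Bool, F y = F b + F (!b) := by
  cases b <;> simp [add_comm]

/-- Level sum. -/
def SS (X : ℕ → Fin D → Bool) (Y : ℕ → Bool) (h : ℕ) (η : ℝ) (t : ℕ) : ℝ :=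
  ∑ f : (Fin h → Bool) → Bool, Real.exp (-η * Lexp X Y h f t)

lemma SS_pos (X : ℕ → Fin D → Bool) (Y : ℕ → Bool) (h : ℕ) (η : ℝ) (t : ℕ) : 0 < SS X Y h η t :=
  Finset.sum_pos (fun _ _ => Real.exp_pos _) Finset.univ_nonempty

/-- Level sum restricted to experts predicting `y` at round `t`. -/
def SB (X : ℕ → Fin D → Bool) (Y : ℕ → Bool) (h : ℕ) (η : ℝ) (t : ℕ) (y : Bool) : ℝ :=
  ∑ f : (Fin h → Bool) → Bool, if f (trunc h (X t)) = y then Real.exp (-η * Lexp X Y h f t) else 0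

lemma SB_le_SS (X : ℕ → Fin D → Bool) (Y : ℕ → Bool) (h : ℕ) (η : ℝ) (t : ℕ) (y : Bool) :
    SB X Y h η t y ≤ SS X Y h η t := by
  refine Finset.sum_le_sum fun f _ => ?_
  split_ifs
  · exact le_rfl
  · exact (Real.exp_pos _).le

lemma SS_eq {d h : ℕ} (hdh : d ≤ h) (X : ℕ → Fin D → Bool) (Y : ℕ → Bool)
    (fs : (Fin d → Bool) → Bool) (η : ℝ) (t : ℕ) :
    SS X Y h η t = Real.exp (-η * Lexp X Y d fs t) *
      ∏ z : Fin h → Bool, (1 + Real.exp (η * GG X Y fs h z t)) := by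
  unfold SS
  simp_rw [exp_Lexp hdh X Y fs]
  rw [← Finset.mul_sum]
  congr 1
  rw [sum_prod_bool (fun z y => if y = fs (trunc d z) then 1 else Real.exp (η * GG X Y fs h z t))]
  apply Finset.prod_congr rfl
  intro z _
  rw [sum_bool_sel (fs (trunc d z))]
  simp

lemma SB_le {d h : ℕ} (hdh : d ≤ h) (X : ℕ → Fin D → Bool) (Y : ℕ → Bool)
    (fs : (Fin d → Bool) → Bool) (η : ℝ) (t : ℕ) :
    SB X Y h η t (!(fs (trunc d (X t)))) ≤
      Real.exp (η * GG X Y fs h (trunc h (X t)) t) * SS X Y h η t := by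
  rw [SS_eq hdh X Y fs]
  set z0 := trunc h (X t) with hz0
  have hfs : fs (trunc d (X t)) = fs (trunc d z0) := by rw [hz0, trunc_trunc hdh]
  have h1 : SB X Y h η t (!(fs (trunc d (X t)))) = Real.exp (-η * Lexp X Y d fs t) *
      ∑ f : (Fin h → Bool) → Bool, ∏ z : Fin h → Bool,
        (if z = z0 ∧ f z = fs (trunc d z) then 0 else
          if f z = fs (trunc d z) then 1 else Real.exp (η * GG X Y fs h z t)) := by
    unfold SB
    rw [Finset.mul_sum]
    apply Finset.sum_congr rfl
    intro f _
    rw [exp_Lexp hdh X Y fs, hfs]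
    by_cases hf : f z0 = fs (trunc d z0)
    · rw [if_neg (by rw [← hz0, hf]; simp)]
      rw [Finset.prod_eq_zero (Finset.mem_univ z0)]
      · simp
      · simp [hf]
    · rw [if_pos (by rw [← hz0]; cases h1 : f z0 <;> cases h2 : fs (trunc d z0) <;> simp_all)]
      congr 1
      apply Finset.prod_congr rfl
      intro z _
      have : ¬ (z = z0 ∧ f z = fs (trunc d z)) := by rintro ⟨rfl, h⟩; exact hf h
      rw [if_neg this]
  rw [h1, mul_left_comm]
  apply mul_le_mul_of_nonneg_left _ (Real.exp_pos _).le
  rw [sum_prod_bool (fun z y => if z = z0 ∧ y = fs (trunc d z) then 0 else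
          if y = fs (trunc d z) then 1 else Real.exp (η * GG X Y fs h z t))]
  have h2 : Real.exp (η * GG X Y fs h z0 t) =
      ∏ z : Fin h → Bool, if z = z0 then Real.exp (η * GG X Y fs h z t) else 1 := by
    rw [Finset.prod_ite_eq' Finset.univ z0]; simp
  rw [h2, ← Finset.prod_mul_distrib]
  apply Finset.prod_le_prod
  · intro z _
    apply Finset.sum_nonneg
    intro y _
    split_ifs <;> first | exact le_rfl | exact zero_le_one | exact (Real.exp_pos _).le
  · intro z _
    rw [sum_bool_sel (fs (trunc d z))]
    have := Real.exp_pos (η * GG X Y fs h z t)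
    by_cases hz : z = z0
    · rw [hz] at this ⊢
      simp
      nlinarith
    · simp [hz]

lemma ZZ_eq (X : ℕ → Fin D → Bool) (Y : ℕ → Bool) (η : ℝ) (t : ℕ) :
    ZZ X Y η t = ∑ h ∈ Finset.range (D + 1), gprop h * SS X Y h η t := by
  unfold ZZ
  rw [pri_sum]
  simp_rw [Lexp_lift]
  rfl

lemma wpred_eq (X : ℕ → Fin D → Bool) (Y : ℕ → Bool) (η : ℝ) (t : ℕ) (y : Bool) :
    wpred gprop X Y η t y = (∑ h ∈ Finset.range (D + 1), gprop h * SB X Y h η t y) / ZZ X Y η t := by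
  unfold wpred
  congr 1
  have := pri_sum (D := D) gprop
    (fun f => if f (X t) = y then Real.exp (-η * Lexp X Y D f t) else 0)
  simp_rw [mul_ite, mul_zero] at this
  rw [this]
  apply Finset.sum_congr rfl
  intro h _
  simp_rw [Lexp_lift]
  rfl

lemma ZZ_ge_level {h : ℕ} (hD : h ≤ D) (X : ℕ → Fin D → Bool) (Y : ℕ → Bool) (η : ℝ) (t : ℕ) :
    gprop h * SS X Y h η t ≤ ZZ X Y η t := by
  rw [ZZ_eq]
  exact Finset.single_le_sum (f := fun h => gprop h * SS X Y h η t)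
    (fun i _ => (mul_pos (gprop_pos i) (SS_pos ..)).le) (Finset.mem_range.2 (by omega))

lemma ZZ_ge_expert {h : ℕ} (hD : h ≤ D) (X : ℕ → Fin D → Bool) (Y : ℕ → Bool) (η : ℝ) (t : ℕ)
    (f : (Fin h → Bool) → Bool) :
    gprop h * Real.exp (-η * Lexp X Y h f t) ≤ ZZ X Y η t := by
  refine le_trans (mul_le_mul_of_nonneg_left ?_ (gprop_pos h).le) (ZZ_ge_level hD X Y η t)
  exact Finset.single_le_sum (f := fun f => Real.exp (-η * Lexp X Y h f t))
    (fun i _ => (Real.exp_pos _).le) (Finset.mem_univ f)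

lemma num_level (d h : ℕ) (hdh : d + 2 ≤ h) :
    gprop h * (211 / 100 : ℝ) ^ (2 ^ h) ≤ (4 * 2 ^ d / 2 ^ h) * gprop d := by
  rw [gprop_eq, gprop_eq]
  obtain ⟨k, rfl⟩ := Nat.exists_eq_add_of_le hdh
  have hm : 4 * 2 ^ d ≤ 2 ^ (d + 2 + k) := by
    have : 2 ^ (d + 2 + k) = 4 * 2 ^ d * 2 ^ k := by ring
    rw [this]; exact Nat.le_mul_of_pos_right _ (by positivity)
  set n : ℕ := 2 ^ d with hn
  set m : ℕ := 2 ^ (d + 2 + k) with hmm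
  have hn1 : 1 ≤ n := Nat.one_le_two_pow
  have e1 : ((2:ℝ) ^ d) = (n : ℝ) := by rw [hn]; push_cast; rfl
  have e2 : ((2:ℝ) ^ (d+2+k)) = (m : ℝ) := by rw [hmm]; push_cast; rfl
  rw [e1, e2]
  have hn1' : (1:ℝ) ≤ n := by exact_mod_cast hn1
  have hm1' : (1:ℝ) ≤ m := by exact_mod_cast (by omega : 1 ≤ m)
  have h1 : (4:ℝ) ^ n ≤ (1415 / 1000 : ℝ) ^ m := by
    calc (4:ℝ) ^ n ≤ ((1415 / 1000 : ℝ) ^ 4) ^ n := by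
          apply pow_le_pow_left₀ (by norm_num); norm_num
      _ = (1415 / 1000 : ℝ) ^ (4 * n) := by rw [pow_mul]
      _ ≤ _ := pow_le_pow_right₀ (by norm_num) hm
  have h2 : (m : ℝ) * (3 / 4 : ℝ) ^ m ≤ 4 := by
    have hb := one_add_mul_le_pow (show (-2:ℝ) ≤ 1/3 by norm_num) m
    have hb' : (1 + 1/3 : ℝ) ^ m * (3/4) ^ m = 1 := by rw [← mul_pow]; norm_num
    have hp : (0:ℝ) < (3/4) ^ m := by positivity
    nlinarith
  have h3 : (1/4 : ℝ) ^ m * (211/100) ^ m * 4 ^ n ≤ 4 * n / m := by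
    rw [le_div_iff₀ (by linarith)]
    calc (1/4 : ℝ) ^ m * (211/100) ^ m * 4 ^ n * m
        ≤ (1/4 : ℝ) ^ m * (211/100) ^ m * (1415 / 1000 : ℝ) ^ m * m := by gcongr
      _ = (1/4 * (211/100) * (1415/1000) : ℝ) ^ m * m := by rw [mul_pow, mul_pow]
      _ ≤ (3/4 : ℝ) ^ m * m := by
          gcongr; norm_num
      _ ≤ 4 := by linarith
      _ ≤ 4 * n := by linarith
  have e3 : (4:ℝ) ^ n * (1/4) ^ n = 1 := by rw [← mul_pow]; norm_num
  calc (1/4 : ℝ) ^ m * (211/100) ^ m = ((1/4 : ℝ) ^ m * (211/100) ^ m * 4 ^ n) * (1/4)^n := by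
        rw [mul_assoc _ ((4:ℝ)^n), e3, mul_one]
    _ ≤ _ := by gcongr

lemma exp_tenth : 1 + Real.exp (1/10) ≤ 211/100 := by
  have := exp_quad (1/10) (by rw [abs_of_pos] <;> norm_num)
  linarith

lemma high_level {d h : ℕ} (hdh : d ≤ h) (hhD : h ≤ D) (X : ℕ → Fin D → Bool) (Y : ℕ → Bool)
    (fs : (Fin d → Bool) → Bool) (η : ℝ) (t : ℕ)
    (hG : ∀ z, η * GG X Y fs h z t ≤ 1/10) :
    gprop h * SB X Y h η t (!(fs (trunc d (X t)))) ≤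
      (4 * 2 ^ d / 2 ^ h) * Real.exp (η * GG X Y fs h (trunc h (X t)) t) * ZZ X Y η t := by
  have hE := Real.exp_pos (η * GG X Y fs h (trunc h (X t)) t)
  have hZ := ZZ_pos X Y η t
  have h1 := mul_le_mul_of_nonneg_left (SB_le hdh X Y fs η t) (gprop_pos h).le
  refine le_trans h1 ?_
  by_cases hh : h ≤ d + 1
  · have h2 := ZZ_ge_level hhD X Y η t
    have h0 := (mul_pos (gprop_pos h) (SS_pos X Y h η t)).le
    have h3 : (1:ℝ) ≤ 4 * 2 ^ d / 2 ^ h := by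
      rw [le_div_iff₀ (by positivity), one_mul]
      calc (2:ℝ) ^ h ≤ 2 ^ (d + 2) := pow_le_pow_right₀ (by norm_num) (by omega)
        _ = _ := by ring
    calc gprop h * (Real.exp (η * GG X Y fs h (trunc h (X t)) t) * SS X Y h η t)
        = 1 * Real.exp (η * GG X Y fs h (trunc h (X t)) t) * (gprop h * SS X Y h η t) := by ring
      _ ≤ _ := by gcongr
  · have h2 := ZZ_ge_expert (hdh.trans hhD) X Y η t fs
    have h3 : SS X Y h η t ≤ Real.exp (-η * Lexp X Y d fs t) * (211/100) ^ (2 ^ h) := by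
      rw [SS_eq hdh X Y fs]
      apply mul_le_mul_of_nonneg_left _ (Real.exp_pos _).le
      calc ∏ z : Fin h → Bool, (1 + Real.exp (η * GG X Y fs h z t))
          ≤ ∏ z : Fin h → Bool, (211/100 : ℝ) := by
            apply Finset.prod_le_prod
            · intro z _; positivity
            · intro z _
              have := Real.exp_le_exp.2 (hG z)
              linarith [exp_tenth]
        _ = _ := by simp [div_pow]
    have h4 := num_level d h (by omega)
    have hg := gprop_pos h
    calc gprop h * (Real.exp (η * GG X Y fs h (trunc h (X t)) t) * SS X Y h η t)
        ≤ gprop h * (Real.exp (η * GG X Y fs h (trunc h (X t)) t) *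
            (Real.exp (-η * Lexp X Y d fs t) * (211/100) ^ (2 ^ h))) := by gcongr
      _ = Real.exp (η * GG X Y fs h (trunc h (X t)) t) * Real.exp (-η * Lexp X Y d fs t) *
            (gprop h * (211/100) ^ (2 ^ h)) := by ring
      _ ≤ Real.exp (η * GG X Y fs h (trunc h (X t)) t) * Real.exp (-η * Lexp X Y d fs t) *
            ((4 * 2 ^ d / 2 ^ h) * gprop d) := by gcongr
      _ = (4 * 2 ^ d / 2 ^ h) * Real.exp (η * GG X Y fs h (trunc h (X t)) t) *
            (gprop d * Real.exp (-η * Lexp X Y d fs t)) := by ring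
      _ ≤ _ := by gcongr

lemma low_levels {d : ℕ} (hd : 1 ≤ d) (hdD : d ≤ D) (X : ℕ → Fin D → Bool) (Y : ℕ → Bool)
    (fs : (Fin d → Bool) → Bool) (η : ℝ) (hη : 0 ≤ η) (t : ℕ) (κ : ℝ)
    (hL : ∀ f : (Fin (d - 1) → Bool) → Bool, Lexp X Y d fs t - Lexp X Y (d - 1) f t ≤ κ) (y : Bool) :
    ∑ h ∈ Finset.range d, gprop h * SB X Y h η t y ≤ 4 ^ (2 ^ d) * Real.exp (η * κ) * ZZ X Y η t := by
  have h1 : ∀ h ∈ Finset.range d, gprop h * SB X Y h η t y ≤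
      (gprop h * 2 ^ 2 ^ h) * (Real.exp (η * κ) * Real.exp (-η * Lexp X Y d fs t)) := by
    intro h hh
    have hh' : h ≤ d - 1 := by have := Finset.mem_range.1 hh; omega
    rw [mul_assoc]
    apply mul_le_mul_of_nonneg_left _ (gprop_pos h).le
    refine (SB_le_SS ..).trans ?_
    unfold SS
    calc ∑ f : (Fin h → Bool) → Bool, Real.exp (-η * Lexp X Y h f t)
        ≤ ∑ f : (Fin h → Bool) → Bool, Real.exp (η * κ) * Real.exp (-η * Lexp X Y d fs t) := by
          refine Finset.sum_le_sum fun f _ => ?_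
          rw [← Real.exp_add, Real.exp_le_exp]
          have := hL (fun x => f (trunc h x))
          rw [Lexp_lift' hh'] at this
          nlinarith
      _ = _ := by simp
  refine (Finset.sum_le_sum h1).trans ?_
  rw [← Finset.sum_mul]
  have h2 := sum_gprop_le d
  have h3 := ZZ_ge_expert hdD X Y η t fs
  have h4 : (4:ℝ) ^ (2 ^ d) * gprop d = 1 := by rw [gprop_eq, ← mul_pow]; norm_num
  calc (∑ h ∈ Finset.range d, gprop h * 2 ^ 2 ^ h) * (Real.exp (η * κ) * Real.exp (-η * Lexp X Y d fs t))
      ≤ 1 * (Real.exp (η * κ) * Real.exp (-η * Lexp X Y d fs t)) := by gcongr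
    _ = 4 ^ (2 ^ d) * Real.exp (η * κ) * (gprop d * Real.exp (-η * Lexp X Y d fs t)) := by
        linear_combination (-(Real.exp (η * κ) * Real.exp (-η * Lexp X Y d fs t))) * h4
    _ ≤ _ := by gcongr

lemma W_bound {d : ℕ} (hd : 1 ≤ d) (hdD : d ≤ D) (X : ℕ → Fin D → Bool) (Y : ℕ → Bool)
    (fs : (Fin d → Bool) → Bool) (η : ℝ) (hη : 0 ≤ η) (t : ℕ) (κ : ℝ)
    (hL : ∀ f : (Fin (d - 1) → Bool) → Bool, Lexp X Y d fs t - Lexp X Y (d - 1) f t ≤ κ)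
    (hG : ∀ h, d ≤ h → h ≤ D → ∀ z, η * GG X Y fs h z t ≤ 1/10) :
    wpred gprop X Y η t (!(fs (trunc d (X t)))) ≤
      4 ^ (2 ^ d) * Real.exp (η * κ) + ∑ h ∈ Finset.Icc d D,
        (4 * 2 ^ d / 2 ^ h) * Real.exp (η * GG X Y fs h (trunc h (X t)) t) := by
  rw [wpred_eq, div_le_iff₀ (ZZ_pos ..), add_mul, Finset.sum_mul]
  have e : Finset.Icc d D = Finset.Ico d (D + 1) := by ext; simp only [Finset.mem_Icc, Finset.mem_Ico]; omega
  rw [← Finset.sum_range_add_sum_Ico _ (show d ≤ D + 1 by omega), e]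
  apply add_le_add
  · exact low_levels hd hdD X Y fs η hη t κ hL _
  · apply Finset.sum_le_sum
    intro h hh
    rw [Finset.mem_Ico] at hh
    exact high_level hh.1 (by omega) X Y fs η t (hG h hh.1 (by omega))

/-! ### Deterministic bound on Delta under the good event -/

lemma NN_nonneg (X : ℕ → Fin D → Bool) (h : ℕ) (z : Fin h → Bool) (t : ℕ) : 0 ≤ NN X h z t := by
  unfold NN
  exact Finset.sum_nonneg fun i _ => by split_ifs <;> norm_num

lemma count_eq (X : ℕ → Fin D → Bool) (h : ℕ) (c : ℝ) (hc : 0 < c) (T : ℕ) :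
    ∑ t ∈ Finset.Icc 1 T, Real.exp (-c * NN X h (trunc h (X t)) t) =
      ∑ z : Fin h → Bool, (1 - Real.exp (-c * NN X h z T)) / (Real.exp c - 1) := by
  have hc1 : 0 < Real.exp c - 1 := by
    have := Real.add_one_lt_exp hc.ne'; linarith
  induction T with
  | zero => simp [NN]
  | succ T ih =>
    rw [Finset.sum_Icc_succ_top (by omega), ih]
    have hN : ∀ z, NN X h z (T + 1) = NN X h z T + if trunc h (X (T+1)) = z then 1 else 0 := by
      intro z; unfold NN; rw [Finset.sum_Icc_succ_top (by omega)]
    have h1 : Real.exp (-c * NN X h (trunc h (X (T+1))) (T+1)) =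
        ∑ z : Fin h → Bool, if trunc h (X (T+1)) = z then Real.exp (-c * NN X h z (T+1)) else 0 := by
      rw [Finset.sum_ite_eq]; simp
    rw [h1, ← Finset.sum_add_distrib]
    apply Finset.sum_congr rfl
    intro z _
    rw [hN]
    split_ifs with hz
    · have e : Real.exp (-c * NN X h z T) = Real.exp (-c * (NN X h z T + 1)) * Real.exp c := by
        rw [← Real.exp_add]; ring_nf
      rw [e]
      field_simp
      ring
    · simp

lemma count_sum (X : ℕ → Fin D → Bool) (h : ℕ) (c : ℝ) (hc : 0 < c) (T : ℕ) :
    ∑ t ∈ Finset.Icc 1 T, Real.exp (-c * NN X h (trunc h (X t)) t) ≤ 2 ^ h / c := by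
  have hc2 := Real.add_one_le_exp c
  rw [count_eq X h c hc]
  calc ∑ z : Fin h → Bool, (1 - Real.exp (-c * NN X h z T)) / (Real.exp c - 1)
      ≤ ∑ z : Fin h → Bool, 1 / c := by
        apply Finset.sum_le_sum
        intro z _
        have := Real.exp_pos (-c * NN X h z T)
        apply div_le_div₀ <;> linarith
    _ = _ := by simp; ring

lemma geom_sum_le (c a : ℝ) (hc : 0 < c) (ha : 0 ≤ a) (T : ℕ) :
    ∑ t ∈ Finset.Icc 1 T, min 1 (Real.exp (-c * ((t:ℝ) - a))) ≤ a + 1 + 1 / c := by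
  have hc1 : 0 < Real.exp c - 1 := by
    have := Real.add_one_lt_exp hc.ne'; linarith
  set N := ⌊a⌋₊ + 1 with hN
  have hN1 : (N:ℝ) ≤ a + 1 := by
    rw [hN]; push_cast; linarith [Nat.floor_le ha]
  have hN2 : a ≤ N := by
    rw [hN]; push_cast; exact (Nat.lt_floor_add_one a).le
  have small : ∀ m : ℕ, ∑ t ∈ Finset.Icc 1 m, min 1 (Real.exp (-c * ((t:ℝ) - a))) ≤ m := by
    intro m
    calc _ ≤ ∑ t ∈ Finset.Icc 1 m, (1:ℝ) := Finset.sum_le_sum fun t _ => min_le_left _ _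
      _ = m := by simp
  have big : ∀ j : ℕ, ∑ t ∈ Finset.Icc 1 (N + j), min 1 (Real.exp (-c * ((t:ℝ) - a))) ≤
      N + (1 - Real.exp (-c * j)) / (Real.exp c - 1) := by
    intro j
    induction j with
    | zero => simpa using small N
    | succ j ih =>
      rw [← add_assoc, Finset.sum_Icc_succ_top (by omega)]
      have h1 : min 1 (Real.exp (-c * (((N + j + 1 : ℕ):ℝ) - a))) ≤ Real.exp (-c * (j + 1)) := by
        refine (min_le_right _ _).trans (Real.exp_le_exp.2 ?_)
        push_cast
        nlinarith
      have e : Real.exp (-c * j) = Real.exp (-c * (j + 1)) * Real.exp c := by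
        rw [← Real.exp_add]; ring_nf
      have e2 : (1 - Real.exp (-c * j)) / (Real.exp c - 1) + Real.exp (-c * (j + 1)) =
        (1 - Real.exp (-c * (j + 1))) / (Real.exp c - 1) := by
        rw [e]; field_simp; ring
      push_cast at *
      linarith
  have hc0 : 0 < 1 / c := by positivity
  by_cases hT : T ≤ N
  · have : (T:ℝ) ≤ N := by exact_mod_cast hT
    linarith [small T]
  · obtain ⟨j, rfl⟩ := Nat.exists_eq_add_of_le (by omega : N ≤ T)
    have h2 : (1 - Real.exp (-c * j)) / (Real.exp c - 1) ≤ 1 / c := by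
      have := Real.exp_pos (-c * j)
      have hc2 := Real.add_one_le_exp c
      apply div_le_div₀ <;> linarith
    linarith [big j]

lemma Delta_sq (X : ℕ → Fin D → Bool) (Y : ℕ → Bool) (Δ0 : ℝ) (hΔ : 1 ≤ Δ0) (y : ℕ → Bool) (T : ℕ) :
    Delta gprop X Y T ^ 2 ≤ (Δ0 + 1) ^ 2 + 3 * ∑ t ∈ Finset.Icc 1 T,
      if Δ0 ≤ Delta gprop X Y (t - 1) then wpred gprop X Y (eta gprop X Y t) t (y t) else 0 := by
  induction T with
  | zero => simp [Delta]; positivity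
  | succ T ih =>
    rw [Finset.sum_Icc_succ_top (by omega)]
    simp only [Nat.add_sub_cancel]
    have hl0 : 0 < Real.log 2 := Real.log_pos (by norm_num)
    have hl := Real.log_two_lt_d9
    have h0 := Delta_nonneg X Y T
    have hm0 := mixgap_nonneg X Y (eta gprop X Y (T+1)) (eta_nonneg ..) (T + 1)
    have hm1 := mixgap_le_one X Y (eta gprop X Y (T+1)) (eta_nonneg ..) (T + 1)
    split_ifs with hc
    · have hpos : 0 < Delta gprop X Y T := by linarith
      have hη0 : 0 < eta gprop X Y (T+1) := div_pos hl0 hpos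
      have hη1 : eta gprop X Y (T+1) ≤ 1 := by
        rw [eta_succ, div_le_one hpos]; linarith
      have hle := mixgap_le_eta X Y _ hη0 hη1 (T+1) (y (T+1))
      have hw0 := wpred_nonneg X Y (eta gprop X Y (T+1)) (T+1) (y (T+1))
      have e : Delta gprop X Y T * eta gprop X Y (T+1) = Real.log 2 := by
        rw [eta_succ]; field_simp
      rw [Delta_succ]
      set m := mixgap gprop X Y (eta gprop X Y (T+1)) (T+1)
      set w := wpred gprop X Y (eta gprop X Y (T+1)) (T+1) (y (T+1))
      have h1 : Delta gprop X Y T * m ≤ Real.log 2 * w := by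
        rw [← e, mul_assoc]; exact mul_le_mul_of_nonneg_left hle h0
      have h2 : m * m ≤ w := by nlinarith
      nlinarith
    · have hs : 0 ≤ ∑ t ∈ Finset.Icc 1 T,
        if Δ0 ≤ Delta gprop X Y (t - 1) then wpred gprop X Y (eta gprop X Y t) t (y t) else 0 :=
        Finset.sum_nonneg fun t _ => by
          split_ifs
          · exact wpred_nonneg ..
          · exact le_rfl
      have h1 : Delta gprop X Y (T+1) ≤ Δ0 + 1 := by rw [Delta_succ]; linarith
      have h2 := Delta_nonneg X Y (T+1)
      nlinarith

lemma W_round {d : ℕ} (hd : 1 ≤ d) (hdD : d ≤ D) (X : ℕ → Fin D → Bool) (Y : ℕ → Bool)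
    (fs : (Fin d → Bool) → Bool) (ε k1 k2 : ℝ) (hε : 0 < ε) (hk1 : 1 ≤ k1) (t : ℕ)
    (hG : ∀ h, d ≤ h → h ≤ D → ∀ z, GG X Y fs h z t ≤ k1 - ε / 4 * NN X h z t)
    (hL : ∀ f : (Fin (d - 1) → Bool) → Bool,
      Lexp X Y d fs t - Lexp X Y (d - 1) f t ≤ k2 - ε / 4 * t)
    (η H : ℝ) (hH : 0 < H) (hHη : H ≤ η) (hη : η * k1 ≤ 1 / 10) :
    wpred gprop X Y η t (!(fs (trunc d (X t)))) ≤
      min 1 (Real.exp (-(H * ε / 4) * ((t:ℝ) - (4 * k2 / ε + 4 * 2 ^ d * Real.log 4 / (H * ε))))) +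
      ∑ h ∈ Finset.Icc d D,
        (8 * 2 ^ d / 2 ^ h) * Real.exp (-(H * ε / 4) * NN X h (trunc h (X t)) t) := by
  have hη0 : 0 < η := lt_of_lt_of_le hH hHη
  have hGb : ∀ h, d ≤ h → h ≤ D → ∀ z, η * GG X Y fs h z t ≤ 1/10 - H * ε / 4 * NN X h z t := by
    intro h h1 h2 z
    have hN := NN_nonneg X h z t
    have := mul_le_mul_of_nonneg_left (hG h h1 h2 z) hη0.le
    have h3 : H * (ε / 4 * NN X h z t) ≤ η * (ε / 4 * NN X h z t) :=
      mul_le_mul_of_nonneg_right hHη (by positivity)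
    nlinarith
  have hW := W_bound hd hdD X Y fs η hη0.le t _ hL (fun h h1 h2 z => by
    have := hGb h h1 h2 z
    have hN := NN_nonneg X h z t
    have : 0 ≤ H * ε / 4 * NN X h z t := by positivity
    linarith [hGb h h1 h2 z])
  have hS : ∑ h ∈ Finset.Icc d D, (4 * 2 ^ d / 2 ^ h) * Real.exp (η * GG X Y fs h (trunc h (X t)) t) ≤
      ∑ h ∈ Finset.Icc d D,
        (8 * 2 ^ d / 2 ^ h) * Real.exp (-(H * ε / 4) * NN X h (trunc h (X t)) t) := by
    apply Finset.sum_le_sum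
    intro h hh
    rw [Finset.mem_Icc] at hh
    have h1 := Real.exp_le_exp.2 (hGb h hh.1 hh.2 (trunc h (X t)))
    rw [sub_eq_add_neg, Real.exp_add, ← neg_mul] at h1
    have h2 := exp_tenth
    have h3 := Real.exp_pos (-(H * ε / 4) * NN X h (trunc h (X t)) t)
    have h4 : Real.exp (η * GG X Y fs h (trunc h (X t)) t) ≤
        2 * Real.exp (-(H * ε / 4) * NN X h (trunc h (X t)) t) := by nlinarith
    calc _ ≤ (4 * 2 ^ d / 2 ^ h) * (2 * Real.exp (-(H * ε / 4) * NN X h (trunc h (X t)) t)) :=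
          mul_le_mul_of_nonneg_left h4 (by positivity)
      _ = _ := by ring
  have hS0 : 0 ≤ ∑ h ∈ Finset.Icc d D,
        (8 * 2 ^ d / 2 ^ h : ℝ) * Real.exp (-(H * ε / 4) * NN X h (trunc h (X t)) t) :=
    Finset.sum_nonneg fun h _ => by positivity
  set a := 4 * k2 / ε + 4 * 2 ^ d * Real.log 4 / (H * ε) with ha
  have hlog4 : 0 < Real.log 4 := Real.log_pos (by norm_num)
  by_cases hta : (t:ℝ) ≤ a
  · have h1 : 1 ≤ Real.exp (-(H * ε / 4) * ((t:ℝ) - a)) := by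
      rw [Real.one_le_exp_iff]
      have : 0 < H * ε / 4 := by positivity
      nlinarith
    rw [min_eq_left h1]
    linarith [wpred_le_one X Y η t (!(fs (trunc d (X t))))]
  · push Not at hta
    have hpos : 0 < H * ε / 4 := by positivity
    have h1 : Real.exp (-(H * ε / 4) * ((t:ℝ) - a)) ≤ 1 := by
      rw [Real.exp_le_one_iff]
      nlinarith
    rw [min_eq_right h1]
    refine hW.trans (add_le_add ?_ hS)
    have e4 : (4:ℝ) ^ (2 ^ d) = Real.exp (2 ^ d * Real.log 4) := by
      rw [mul_comm, Real.exp_mul, Real.exp_log (by norm_num), ← Nat.cast_ofNat (R := ℝ) (n := 2),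
        ← Nat.cast_pow, Real.rpow_natCast]
    rw [e4, ← Real.exp_add, Real.exp_le_exp]
    have h2 : k2 - ε / 4 * t ≤ 0 := by
      have h3 : 4 * k2 / ε ≤ a := by
        rw [ha]
        have : 0 ≤ 4 * 2 ^ d * Real.log 4 / (H * ε) := by positivity
        linarith
      have h4 : 4 * k2 / ε ≤ t := by linarith
      rw [div_le_iff₀ hε] at h4
      linarith
    have h3 : η * (k2 - ε / 4 * t) ≤ H * (k2 - ε / 4 * t) := by nlinarith
    have e5 : -(H * ε / 4) * ((t:ℝ) - a) = 2 ^ d * Real.log 4 + H * (k2 - ε / 4 * t) := by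
      rw [ha]; field_simp; ring
    rw [e5]
    linarith

lemma Delta_bound {d : ℕ} (hd : 1 ≤ d) (hdD : d ≤ D) (X : ℕ → Fin D → Bool) (Y : ℕ → Bool)
    (fs : (Fin d → Bool) → Bool) (ε k1 k2 : ℝ) (hε : 0 < ε) (hk1 : 1 ≤ k1) (hk2 : 0 ≤ k2)
    (T : ℕ) (hT : 1 ≤ T)
    (hG : ∀ h, d ≤ h → h ≤ D → ∀ z, ∀ t ≤ T, GG X Y fs h z t ≤ k1 - ε / 4 * NN X h z t)
    (hL : ∀ f : (Fin (d - 1) → Bool) → Bool, ∀ t ≤ T,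
      Lexp X Y d fs t - Lexp X Y (d - 1) f t ≤ k2 - ε / 4 * t) :
    Delta gprop X Y T ^ 2 ≤ (7 * k1 + 1) ^ 2 +
      3 * (66 * (D * 2 ^ d / ε) * Delta gprop X Y T + 4 * k2 / ε + 1) := by
  have hz : 0 < Delta gprop X Y T := Delta_pos X Y T hT
  set z := Delta gprop X Y T with hzdef
  have hl0 : 0 < Real.log 2 := Real.log_pos (by norm_num)
  have hl := Real.log_two_lt_d9
  have hl' := Real.log_two_gt_d9
  have hl4 : Real.log 4 = 2 * Real.log 2 := by
    rw [show (4:ℝ) = 2 ^ 2 by norm_num, Real.log_pow]; norm_num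
  set H := Real.log 2 / z with hH
  have hHpos : 0 < H := div_pos hl0 hz
  set c := H * ε / 4 with hc
  have hcpos : 0 < c := by positivity
  set a := 4 * k2 / ε + 4 * 2 ^ d * Real.log 4 / (H * ε) with ha
  have ha0 : 0 ≤ a := by rw [ha, hl4]; positivity
  have h1 := Delta_sq X Y (7 * k1) (by linarith) (fun t => !(fs (trunc d (X t)))) T
  have hterm : ∀ t ∈ Finset.Icc 1 T,
      (if 7 * k1 ≤ Delta gprop X Y (t - 1) then
        wpred gprop X Y (eta gprop X Y t) t (!(fs (trunc d (X t)))) else 0) ≤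
      min 1 (Real.exp (-c * ((t:ℝ) - a))) +
      ∑ h ∈ Finset.Icc d D, (8 * 2 ^ d / 2 ^ h) * Real.exp (-c * NN X h (trunc h (X t)) t) := by
    intro t ht
    rw [Finset.mem_Icc] at ht
    split_ifs with hcond
    · have hp : 0 < Delta gprop X Y (t - 1) := by linarith
      have hmono : Delta gprop X Y (t - 1) ≤ z := Delta_mono X Y (by omega)
      refine W_round hd hdD X Y fs ε k1 k2 hε hk1 t (fun h h1 h2 z => hG h h1 h2 z t ht.2)
        (fun f => hL f t ht.2) (eta gprop X Y t) H hHpos ?_ ?_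
      · exact div_le_div_of_nonneg_left hl0.le hp hmono
      · unfold eta
        rw [div_mul_eq_mul_div, div_le_iff₀ hp]
        nlinarith
    · have : 0 ≤ ∑ h ∈ Finset.Icc d D, (8 * 2 ^ d / 2 ^ h : ℝ) * Real.exp (-c * NN X h (trunc h (X t)) t) :=
        Finset.sum_nonneg fun h _ => by positivity
      have h2 : 0 ≤ min 1 (Real.exp (-c * ((t:ℝ) - a))) := le_min zero_le_one (Real.exp_pos _).le
      linarith
  have hsum := Finset.sum_le_sum hterm
  rw [Finset.sum_add_distrib] at hsum
  have hg := geom_sum_le c a hcpos ha0 T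
  have hn : ∑ t ∈ Finset.Icc 1 T, ∑ h ∈ Finset.Icc d D,
      (8 * 2 ^ d / 2 ^ h : ℝ) * Real.exp (-c * NN X h (trunc h (X t)) t) ≤ D * (8 * 2 ^ d / c) := by
    rw [Finset.sum_comm]
    calc _ ≤ ∑ h ∈ Finset.Icc d D, (8 * 2 ^ d / c : ℝ) := by
          apply Finset.sum_le_sum
          intro h _
          rw [← Finset.mul_sum]
          calc _ ≤ (8 * 2 ^ d / 2 ^ h : ℝ) * (2 ^ h / c) :=
                mul_le_mul_of_nonneg_left (count_sum X h c hcpos T) (by positivity)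
            _ = _ := by field_simp
      _ = ((Finset.Icc d D).card : ℝ) * (8 * 2 ^ d / c) := by simp
      _ ≤ _ := by
          apply mul_le_mul_of_nonneg_right _ (by positivity)
          rw [Nat.card_Icc]
          exact_mod_cast (by omega : D + 1 - d ≤ D)
  -- combine
  have hinv : 1 / H ≤ 3 / 2 * z := by
    rw [hH, one_div_div, div_le_iff₀ hl0]; nlinarith
  have hD1 : (1:ℝ) ≤ D := by exact_mod_cast hd.trans hdD
  have h2d : (1:ℝ) ≤ 2 ^ d := one_le_pow₀ (by norm_num)
  have hD2 : (2:ℝ) ^ d ≤ D * 2 ^ d := by nlinarith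
  have hD3 : (1:ℝ) ≤ D * 2 ^ d := by linarith
  have hq : (1 / H) * (1 / ε) ≤ 3 / 2 * z * (1 / ε) := mul_le_mul_of_nonneg_right hinv (by positivity)
  have hq0 : 0 ≤ (1 / H) * (1 / ε) := by positivity
  have e1 : D * (8 * 2 ^ d / c) = 32 * (D * 2 ^ d) * ((1 / H) * (1 / ε)) := by rw [hc]; field_simp; ring
  have e2 : 1 / c = 4 * ((1 / H) * (1 / ε)) := by rw [hc]; field_simp
  have e3 : a = 4 * k2 / ε + 4 * Real.log 4 * 2 ^ d * ((1 / H) * (1 / ε)) := by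
    rw [ha]; field_simp
  have hln4 : 4 * Real.log 4 ≤ 6 := by rw [hl4]; linarith
  have hb2 : 4 * Real.log 4 * 2 ^ d * ((1 / H) * (1 / ε)) ≤ 6 * (D * 2 ^ d) * ((1 / H) * (1 / ε)) := by
    apply mul_le_mul_of_nonneg_right _ hq0
    apply mul_le_mul hln4 hD2 (by positivity) (by norm_num)
  have hb3 : 4 * ((1 / H) * (1 / ε)) ≤ 4 * (D * 2 ^ d) * ((1 / H) * (1 / ε)) := by nlinarith
  have hb4 : 44 * (D * 2 ^ d) * ((1 / H) * (1 / ε)) ≤ 44 * (D * 2 ^ d) * (3 / 2 * z * (1 / ε)) :=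
    mul_le_mul_of_nonneg_left hq (by positivity)
  have e4 : 44 * (D * 2 ^ d) * (3 / 2 * z * (1 / ε)) = 66 * (D * 2 ^ d / ε) * z := by ring
  have hq1 : 0 ≤ 2 * (D * 2 ^ d) * ((1 / H) * (1 / ε)) := by positivity
  linarith

/-! ### Concentration -/

open ProbabilityTheory in
lemma indep_past {Ω α : Type} [MeasurableSpace Ω] [MeasurableSpace α] [Inhabited α] (μ : Measure Ω)
    (Z : ℕ → Ω → α) (hZ : ∀ t, Measurable (Z t)) (hI : iIndepFun Z μ) (t : ℕ)
    (F : (ℕ → α) → ENNReal) (hF : Measurable F)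
    (hdep : ∀ u v : ℕ → α, (∀ s ∈ Finset.Icc 1 t, u s = v s) → F u = F v)
    (φ : α → ENNReal) (hφ : Measurable φ) :
    IndepFun (fun ω => F (fun n => Z n ω)) (fun ω => φ (Z (t + 1) ω)) μ := by
  have h1 := hI.indepFun_finset (Finset.Icc 1 t) {t + 1} (by simp) hZ
  have h2 := h1.comp (φ := fun v : (Finset.Icc 1 t → α) =>
      F (fun n => if h : n ∈ Finset.Icc 1 t then v ⟨n, h⟩ else default))
    (ψ := fun v : (({t + 1} : Finset ℕ) → α) => φ (v ⟨t + 1, by simp⟩))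
    (hF.comp (measurable_pi_lambda _ fun n => by
      by_cases h : n ∈ Finset.Icc 1 t
      · simp only [h, dif_pos]; exact measurable_pi_apply _
      · simp only [h, dif_neg, not_false_eq_true]; exact measurable_const))
    (hφ.comp (measurable_pi_apply _))
  have e : (fun ω => F (fun n => Z n ω)) = (fun v : (Finset.Icc 1 t → α) =>
      F (fun n => if h : n ∈ Finset.Icc 1 t then v ⟨n, h⟩ else default)) ∘
      (fun ω (i : Finset.Icc 1 t) => Z i ω) := by
    funext ω
    apply hdep
    intro s hs
    simp only [hs, dif_pos]
  rw [e]
  exact h2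

/-- Stopped product process. -/
def haltedProd {α : Type} (φ : α → ENNReal) (K : ENNReal) : ℕ → (ℕ → α) → ENNReal
  | 0, _ => 1
  | t + 1, z => if K ≤ haltedProd φ K t z then haltedProd φ K t z else haltedProd φ K t z * φ (z (t + 1))

lemma haltedProd_meas {α : Type} [MeasurableSpace α] (φ : α → ENNReal) (hφ : Measurable φ) (K : ENNReal)
    (t : ℕ) : Measurable (haltedProd φ K t) := by
  induction t with
  | zero => exact measurable_const
  | succ t ih =>
    simp only [haltedProd]
    exact Measurable.ite (measurableSet_le measurable_const ih) ih
      (ih.mul (hφ.comp (measurable_pi_apply _)))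

lemma haltedProd_dep {α : Type} (φ : α → ENNReal) (K : ENNReal) (t : ℕ) (u v : ℕ → α)
    (h : ∀ s ∈ Finset.Icc 1 t, u s = v s) : haltedProd φ K t u = haltedProd φ K t v := by
  induction t with
  | zero => rfl
  | succ t ih =>
    have := ih (fun s hs => h s (by rw [Finset.mem_Icc] at *; omega))
    have h2 := h (t + 1) (by rw [Finset.mem_Icc]; omega)
    simp only [haltedProd, this, h2]

lemma haltedProd_mono {α : Type} (φ : α → ENNReal) (K : ENNReal) (t T : ℕ) (htT : t ≤ T) (u : ℕ → α)
    (h : K ≤ haltedProd φ K t u) : K ≤ haltedProd φ K T u := by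
  induction T, htT using Nat.le_induction with
  | base => exact h
  | succ n _ ih => simp only [haltedProd]; rw [if_pos ih]; exact ih

lemma haltedProd_or {α : Type} (φ : α → ENNReal) (K : ENNReal) (t : ℕ) (u : ℕ → α) :
    K ≤ haltedProd φ K t u ∨ haltedProd φ K t u = ∏ s ∈ Finset.Icc 1 t, φ (u s) := by
  induction t with
  | zero => right; simp [haltedProd]
  | succ t ih =>
    by_cases hK : K ≤ haltedProd φ K t u
    · left; exact haltedProd_mono φ K t (t+1) (by omega) u hK
    · right
      rw [Finset.prod_Icc_succ_top (by omega)]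
      simp only [haltedProd]
      rw [if_neg hK]
      rcases ih with h | h
      · exact absurd h hK
      · rw [h]

open ProbabilityTheory in
lemma haltedProd_int {Ω α : Type} [MeasurableSpace Ω] [MeasurableSpace α] [Inhabited α] (μ : Measure Ω)
    [IsProbabilityMeasure μ]
    (Z : ℕ → Ω → α) (hZ : ∀ t, Measurable (Z t)) (hI : iIndepFun Z μ)
    (φ : α → ENNReal) (hφ : Measurable φ) (hE : ∀ t, ∫⁻ ω, φ (Z t ω) ∂μ ≤ 1) (K : ENNReal) (t : ℕ) :
    ∫⁻ ω, haltedProd φ K t (fun n => Z n ω) ∂μ ≤ 1 := by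
  induction t with
  | zero => simp [haltedProd]
  | succ t ih =>
    have hS := haltedProd_meas φ hφ K t
    have hZZ : Measurable (fun ω n => Z n ω) := measurable_pi_lambda _ hZ
    set A : (ℕ → α) → ENNReal := fun u => if K ≤ haltedProd φ K t u then haltedProd φ K t u else 0 with hA
    set B : (ℕ → α) → ENNReal := fun u => if K ≤ haltedProd φ K t u then 0 else haltedProd φ K t u with hB
    have hAm : Measurable A := Measurable.ite (measurableSet_le measurable_const hS) hS measurable_const
    have hBm : Measurable B := Measurable.ite (measurableSet_le measurable_const hS) measurable_const hS
    have e1 : ∀ u, haltedProd φ K (t+1) u = A u + B u * φ (u (t+1)) := by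
      intro u; simp only [haltedProd, hA, hB]; split_ifs <;> simp
    have e2 : ∀ u, haltedProd φ K t u = A u + B u := by
      intro u; simp only [hA, hB]; split_ifs <;> simp
    have hind := indep_past μ Z hZ hI t B hBm
      (fun u v h => by simp only [hB, haltedProd_dep φ K t u v h]) φ hφ
    have e3 := lintegral_mul_eq_lintegral_mul_lintegral_of_indepFun (hBm.comp hZZ) (hφ.comp (hZ (t+1))) hind
    simp only [Pi.mul_apply, Function.comp] at e3
    calc ∫⁻ ω, haltedProd φ K (t+1) (fun n => Z n ω) ∂μ
        = ∫⁻ ω, A (fun n => Z n ω) + B (fun n => Z n ω) * φ (Z (t+1) ω) ∂μ := by simp_rw [e1]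
      _ = ∫⁻ ω, A (fun n => Z n ω) ∂μ + ∫⁻ ω, B (fun n => Z n ω) * φ (Z (t+1) ω) ∂μ :=
          lintegral_add_left (hAm.comp hZZ) _
      _ = ∫⁻ ω, A (fun n => Z n ω) ∂μ + (∫⁻ ω, B (fun n => Z n ω) ∂μ) * ∫⁻ ω, φ (Z (t+1) ω) ∂μ := by
          rw [← e3]
      _ ≤ ∫⁻ ω, A (fun n => Z n ω) ∂μ + (∫⁻ ω, B (fun n => Z n ω) ∂μ) * 1 := by
          gcongr; exact hE _
      _ = ∫⁻ ω, A (fun n => Z n ω) + B (fun n => Z n ω) ∂μ := by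
          rw [mul_one]; exact (lintegral_add_left (hAm.comp hZZ) _).symm
      _ = ∫⁻ ω, haltedProd φ K t (fun n => Z n ω) ∂μ := by simp_rw [e2]
      _ ≤ 1 := ih

open ProbabilityTheory in
lemma ville {Ω α : Type} [MeasurableSpace Ω] [MeasurableSpace α] [Inhabited α] (μ : Measure Ω)
    [IsProbabilityMeasure μ]
    (Z : ℕ → Ω → α) (hZ : ∀ t, Measurable (Z t)) (hI : iIndepFun Z μ)
    (φ : α → ENNReal) (hφ : Measurable φ) (hE : ∀ t, ∫⁻ ω, φ (Z t ω) ∂μ ≤ 1) (K : ENNReal)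
    (hK0 : K ≠ 0) (hK : K ≠ ⊤) (T : ℕ) :
    μ {ω | ∃ t ≤ T, K ≤ ∏ s ∈ Finset.Icc 1 t, φ (Z s ω)} ≤ 1 / K := by
  have hsub : {ω | ∃ t ≤ T, K ≤ ∏ s ∈ Finset.Icc 1 t, φ (Z s ω)} ⊆
      {ω | K ≤ haltedProd φ K T (fun n => Z n ω)} := by
    rintro ω ⟨t, ht, h⟩
    apply haltedProd_mono φ K t T ht
    rcases haltedProd_or φ K t (fun n => Z n ω) with h1 | h1
    · exact h1
    · rw [h1]; exact h
  refine (measure_mono hsub).trans ?_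
  have hZZ : Measurable (fun ω n => Z n ω) := measurable_pi_lambda _ hZ
  have := mul_meas_ge_le_lintegral (μ := μ) ((haltedProd_meas φ hφ K T).comp hZZ) K
  rw [ENNReal.le_div_iff_mul_le (Or.inl hK0) (Or.inl hK), mul_comm]
  exact this.trans (haltedProd_int μ Z hZ hI φ hφ hE K T)

lemma tilt {α : Type} [Fintype α] (p w V : α → ℝ) (ε : ℝ) (hε : 0 < ε) (hε1 : ε ≤ 1/4)
    (hp : ∀ a, 0 ≤ p a) (hp1 : ∑ a, p a = 1) (hV : ∀ a, V a = 0 ∨ V a = 1) (hw : ∀ a, |w a| ≤ V a)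
    (hm : ∑ a, p a * w a ≤ -ε * ∑ a, p a * V a) :
    ∑ a, p a * Real.exp (ε / 2 * w a + ε ^ 2 / 8 * V a) ≤ 1 := by
  have h1 : ∀ a, Real.exp (ε / 2 * w a + ε ^ 2 / 8 * V a) ≤ 1 + ε / 2 * w a + ε ^ 2 / 2 * V a := by
    intro a
    have hwa := hw a
    rcases hV a with h | h
    · rw [h] at hwa ⊢
      have : w a = 0 := abs_nonpos_iff.1 hwa
      simp [this]
    · rw [h] at hwa ⊢
      obtain ⟨h2, h3⟩ := abs_le.1 hwa
      have hab : |ε / 2 * w a + ε ^ 2 / 8 * 1| ≤ ε * (17/32) := by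
        rw [abs_le]; constructor <;> nlinarith
      have hq := exp_quad (ε / 2 * w a + ε ^ 2 / 8 * 1) (hab.trans (by linarith))
      have hs : (ε / 2 * w a + ε ^ 2 / 8 * 1) ^ 2 ≤ (ε * (17/32)) ^ 2 := sq_le_sq' (abs_le.1 hab).1 (abs_le.1 hab).2
      nlinarith
  calc ∑ a, p a * Real.exp (ε / 2 * w a + ε ^ 2 / 8 * V a)
      ≤ ∑ a, p a * (1 + ε / 2 * w a + ε ^ 2 / 2 * V a) :=
        Finset.sum_le_sum fun a _ => mul_le_mul_of_nonneg_left (h1 a) (hp a)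
    _ = ∑ a, p a + ε / 2 * ∑ a, p a * w a + ε ^ 2 / 2 * ∑ a, p a * V a := by
        rw [Finset.mul_sum, Finset.mul_sum, ← Finset.sum_add_distrib, ← Finset.sum_add_distrib]
        exact Finset.sum_congr rfl fun a _ => by ring
    _ ≤ 1 := by rw [hp1]; nlinarith

open ProbabilityTheory in
lemma conc {Ω α ι : Type} [MeasurableSpace Ω] [MeasurableSpace α] [MeasurableSingletonClass α]
    [Inhabited α] [Fintype α] [Fintype ι]
    (μ : Measure Ω) [IsProbabilityMeasure μ]
    (Z : ℕ → Ω → α) (hZ : ∀ t, Measurable (Z t)) (hI : iIndepFun Z μ)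
    (p : α → ℝ) (hlaw : ∀ t a, μ {ω | Z t ω = a} = ENNReal.ofReal (p a))
    (hp : ∀ a, 0 ≤ p a) (hp1 : ∑ a, p a = 1)
    (w V : ι → α → ℝ) (ε : ℝ) (hε : 0 < ε) (hε1 : ε ≤ 1/4)
    (hV : ∀ i a, V i a = 0 ∨ V i a = 1) (hw : ∀ i a, |w i a| ≤ V i a)
    (hm : ∀ i, ∑ a, p a * w i a ≤ -ε * ∑ a, p a * V i a)
    (K : ℝ) (hK : 0 < K) (T : ℕ) :
    μ {ω | ¬ ∀ i, ∀ t ≤ T, ∑ s ∈ Finset.Icc 1 t, w i (Z s ω) ≤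
        2 * Real.log K / ε - ε / 4 * ∑ s ∈ Finset.Icc 1 t, V i (Z s ω)} ≤
      ENNReal.ofReal (Fintype.card ι / K) := by
  set φ : ι → α → ENNReal := fun i a => ENNReal.ofReal (Real.exp (ε / 2 * w i a + ε ^ 2 / 8 * V i a)) with hφ
  have hE : ∀ i t, ∫⁻ ω, φ i (Z t ω) ∂μ ≤ 1 := by
    intro i t
    rw [← lintegral_map (f := φ i) (measurable_of_countable _) (hZ t), lintegral_fintype]
    calc ∑ a, φ i a * (μ.map (Z t)) {a}
        = ∑ a, ENNReal.ofReal (p a * Real.exp (ε / 2 * w i a + ε ^ 2 / 8 * V i a)) := by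
          apply Finset.sum_congr rfl
          intro a _
          rw [Measure.map_apply (hZ t) (measurableSet_singleton a), ENNReal.ofReal_mul (hp a), mul_comm]
          congr 1
          exact hlaw t a
      _ = ENNReal.ofReal (∑ a, p a * Real.exp (ε / 2 * w i a + ε ^ 2 / 8 * V i a)) :=
          (ENNReal.ofReal_sum_of_nonneg fun a _ => mul_nonneg (hp a) (Real.exp_pos _).le).symm
      _ ≤ ENNReal.ofReal 1 :=
          ENNReal.ofReal_le_ofReal (tilt p (w i) (V i) ε hε hε1 hp hp1 (hV i) (hw i) (hm i))
      _ = 1 := by simp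
  have hsub : {ω | ¬ ∀ i, ∀ t ≤ T, ∑ s ∈ Finset.Icc 1 t, w i (Z s ω) ≤
        2 * Real.log K / ε - ε / 4 * ∑ s ∈ Finset.Icc 1 t, V i (Z s ω)} ⊆
      ⋃ i ∈ (Finset.univ : Finset ι), {ω | ∃ t ≤ T, ENNReal.ofReal K ≤ ∏ s ∈ Finset.Icc 1 t, φ i (Z s ω)} := by
    intro ω hω
    simp only [Set.mem_setOf_eq] at hω
    push Not at hω
    obtain ⟨i, t, ht, h⟩ := hω
    simp only [Set.mem_iUnion]
    refine ⟨i, Finset.mem_univ i, t, ht, ?_⟩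
    rw [hφ]
    simp only
    rw [← ENNReal.ofReal_prod_of_nonneg (fun s _ => (Real.exp_pos _).le), ← Real.exp_sum]
    apply ENNReal.ofReal_le_ofReal
    rw [← Real.log_le_iff_le_exp hK, Finset.sum_add_distrib, ← Finset.mul_sum, ← Finset.mul_sum]
    set a := ∑ s ∈ Finset.Icc 1 t, w i (Z s ω)
    set b := ∑ s ∈ Finset.Icc 1 t, V i (Z s ω)
    have h2 := mul_lt_mul_of_pos_left h (by positivity : 0 < ε / 2)
    have e : ε / 2 * (2 * Real.log K / ε - ε / 4 * b) = Real.log K - ε ^ 2 / 8 * b := by field_simp; ring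
    linarith
  refine (measure_mono hsub).trans ((measure_biUnion_finset_le _ _).trans ?_)
  calc ∑ i : ι, μ {ω | ∃ t ≤ T, ENNReal.ofReal K ≤ ∏ s ∈ Finset.Icc 1 t, φ i (Z s ω)}
      ≤ ∑ i : ι, 1 / ENNReal.ofReal K := by
        apply Finset.sum_le_sum
        intro i _
        exact ville μ Z hZ hI (φ i) (measurable_of_countable _) (hE i) _
          (by simpa using hK) ENNReal.ofReal_ne_top T
    _ = ENNReal.ofReal (Fintype.card ι / K) := by
        rw [ENNReal.ofReal_div_of_pos hK]
        simp [div_eq_mul_inv]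

lemma final_quad (Dr P L ε k1 k2 z : ℝ) (hD : 1 ≤ Dr) (hP : 1 ≤ P) (hL : 1 ≤ L)
    (hε : 0 < ε) (hε1 : ε ≤ 1/4) (hk0 : 0 ≤ k1) (hk1 : k1 ≤ 8 * Dr * L / ε)
    (hk2 : k2 ≤ 4 * P * L / ε) (hz : 0 ≤ z)
    (h : z ^ 2 ≤ (7*k1+1)^2 + 3*(66*(Dr*P/ε)*z + 4*k2/ε + 1)) :
    z ≤ 300 * (P * Dr * L / ε ^ 2) := by
  set B := P * Dr * L / ε ^ 2 with hB
  have e2 : 0 < ε ^ 2 := by positivity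
  have hee : ε ^ 2 ≤ ε := by nlinarith
  have hPD : 1 ≤ P * Dr := by nlinarith
  have hPDL : P * Dr ≤ P * Dr * L := by nlinarith
  have hB1 : 1 ≤ B := by
    rw [hB, le_div_iff₀ e2]; nlinarith
  have h1 : Dr * L / ε ≤ B := by
    have : Dr * L ≤ P * Dr * L := by
      have : 0 ≤ Dr * L := by positivity
      nlinarith
    calc Dr * L / ε ≤ P * Dr * L / ε := by gcongr
      _ ≤ B := by rw [hB]; gcongr
  have h2 : Dr * P / ε ≤ B := by
    calc Dr * P / ε ≤ P * Dr * L / ε := div_le_div_of_nonneg_right (by linarith) hε.le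
      _ ≤ B := by rw [hB]; gcongr
  have h3 : k2 / ε ≤ 4 * B := by
    calc k2 / ε ≤ (4 * P * L / ε) / ε := by gcongr
      _ = 4 * (P * 1 * L / ε ^ 2) := by field_simp
      _ ≤ 4 * B := by rw [hB]; gcongr
  have h4 : k1 ≤ 8 * B := by
    calc k1 ≤ 8 * Dr * L / ε := hk1
      _ = 8 * (Dr * L / ε) := by ring
      _ ≤ _ := by linarith
  have h5 : (7*k1+1)^2 ≤ (57 * B)^2 := by
    apply pow_le_pow_left₀ (by linarith); linarith
  have h6 : (Dr*P/ε)*z ≤ B * z := by gcongr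
  have h7 : 4*k2/ε ≤ 16 * B := by
    have : 4*k2/ε = 4 * (k2/ε) := by ring
    linarith
  by_contra hc
  push Not at hc
  have : z ^ 2 ≤ 3249 * B^2 + 198 * (B * z) + 51 * B := by nlinarith
  nlinarith

lemma sum_bool_prod {D : ℕ} (F : (Fin D → Bool) → Bool → ℝ) :
    ∑ a : (Fin D → Bool) × Bool, F a.1 a.2 = ∑ x, (F x true + F x false) := by
  rw [Fintype.sum_prod_type]
  simp

/-- Error probability of a tree expert as a sum over the sub-contexts. -/
lemma err_eq {D : ℕ} (d : ℕ) (Q : (Fin D → Bool) → ℝ) (Pc : (Fin d → Bool) → Bool → ℝ)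
    (h : ℕ) (f : (Fin h → Bool) → Bool) :
    ∑ a : (Fin D → Bool) × Bool, Q a.1 * Pc (trunc d a.1) a.2 *
        (if a.2 ≠ f (trunc h a.1) then (1:ℝ) else 0) =
      ∑ xh : Fin h → Bool, jointP d Q Pc h xh (!f xh) := by
  rw [sum_bool_prod (fun x y => Q x * Pc (trunc d x) y *
        (if y ≠ f (trunc h x) then (1:ℝ) else 0))]
  unfold jointP
  rw [Finset.sum_comm]
  refine Finset.sum_congr rfl fun x _ => ?_
  rw [Finset.sum_ite_eq]
  simp only [Finset.mem_univ, if_true]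
  cases f (trunc h x) <;> simp

lemma pistar_le_err {D : ℕ} (d : ℕ) (Q : (Fin D → Bool) → ℝ) (Pc : (Fin d → Bool) → Bool → ℝ)
    (h : ℕ) (f : (Fin h → Bool) → Bool) :
    pistar d Q Pc h ≤ ∑ xh : Fin h → Bool, jointP d Q Pc h xh (!f xh) := by
  unfold pistar
  refine Finset.sum_le_sum fun xh _ => ?_
  cases f xh
  · exact min_le_right _ _
  · exact min_le_left _ _

lemma err_le_pistar {D : ℕ} (d : ℕ) (Q : (Fin D → Bool) → ℝ) (Pc : (Fin d → Bool) → Bool → ℝ)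
    (hQ : ∀ x, 0 ≤ Q x) (f : (Fin d → Bool) → Bool)
    (hf : ∀ xd, Pc xd (!f xd) ≤ Pc xd (f xd)) :
    ∑ xh : Fin d → Bool, jointP d Q Pc d xh (!f xh) ≤ pistar d Q Pc d := by
  unfold pistar
  refine Finset.sum_le_sum fun xh _ => ?_
  have key : jointP d Q Pc d xh (!f xh) ≤ jointP d Q Pc d xh (f xh) := by
    unfold jointP
    refine Finset.sum_le_sum fun x _ => ?_
    split_ifs with hx
    · rw [hx]; exact mul_le_mul_of_nonneg_left (hf xh) (hQ x)
    · exact le_rfl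
  revert key
  cases f xh <;> intro key <;> simp at key ⊢ <;> exact key

lemma pistar_nonneg {D : ℕ} (d : ℕ) (Q : (Fin D → Bool) → ℝ) (Pc : (Fin d → Bool) → Bool → ℝ)
    (hQ : ∀ x, 0 ≤ Q x) (hP : ∀ x y, 0 ≤ Pc x y) (h : ℕ) : 0 ≤ pistar d Q Pc h := by
  have : ∀ xh y, 0 ≤ jointP d Q Pc h xh y := by
    intro xh y
    unfold jointP
    refine Finset.sum_nonneg fun x _ => ?_
    split_ifs
    · exact mul_nonneg (hQ x) (hP _ _)
    · exact le_rfl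
  exact Finset.sum_nonneg fun xh _ => le_min (this _ _) (this _ _)

lemma pistar_le_half {D : ℕ} (d : ℕ) (Q : (Fin D → Bool) → ℝ) (Pc : (Fin d → Bool) → Bool → ℝ)
    (hQ1 : ∑ x, Q x = 1) (hP1 : ∀ xd : Fin d → Bool, (∑ y : Bool, Pc xd y) = 1)
    (h : ℕ) : pistar d Q Pc h ≤ 1/2 := by
  have e1 := pistar_le_err d Q Pc h (fun _ => false)
  have e2 := pistar_le_err d Q Pc h (fun _ => true)
  rw [← err_eq] at e1 e2
  rw [sum_bool_prod (fun x y => Q x * Pc (trunc d x) y *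
        (if y ≠ false then (1:ℝ) else 0))] at e1
  rw [sum_bool_prod (fun x y => Q x * Pc (trunc d x) y *
        (if y ≠ true then (1:ℝ) else 0))] at e2
  simp at e1 e2
  have : ∑ x, Q x * Pc (trunc d x) true + ∑ x, Q x * Pc (trunc d x) false = 1 := by
    rw [← Finset.sum_add_distrib, ← hQ1]
    refine Finset.sum_congr rfl fun x _ => ?_
    have := hP1 (trunc d x)
    simp at this
    rw [← mul_add, this, mul_one]
  linarith

lemma card_nodes (D : ℕ) :
    (Fintype.card (Σ h : Fin (D+1), (Fin h → Bool)) : ℝ) ≤ 2 ^ (D+1) := by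
  have : Fintype.card (Σ h : Fin (D+1), (Fin h → Bool)) ≤ 2 ^ (D+1) := by
    rw [Fintype.card_sigma]
    simp only [Fintype.card_fun, Fintype.card_bool, Fintype.card_fin]
    rw [Fin.sum_univ_eq_sum_range (fun i => 2 ^ i)]
    have := Nat.geomSum_lt (m := 2) (n := D+1) (s := Finset.range (D+1)) le_rfl (by simp)
    exact this.le
  exact_mod_cast this

lemma final_logs (D d : ℕ) (hd : 1 ≤ d) (hdD : d ≤ D) (δ ε : ℝ) (hδ : 0 < δ) (hδ1 : δ ≤ 1)
    (hε : 0 < ε) (hε1 : ε ≤ 1/4) :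
    1 ≤ Real.log ((D:ℝ) / (ε * δ)) ∧
    1 ≤ 2 * Real.log (2 ^ (D+2) / δ) / ε ∧
    2 * Real.log (2 ^ (D+2) / δ) / ε ≤ 8 * D * Real.log ((D:ℝ) / (ε * δ)) / ε ∧
    0 ≤ 2 * Real.log (2 * 2 ^ (2 ^ (d-1)) / δ) / ε ∧
    2 * Real.log (2 * 2 ^ (2 ^ (d-1)) / δ) / ε ≤ 4 * 2 ^ d * Real.log ((D:ℝ) / (ε * δ)) / ε := by
  have hD1 : (1:ℝ) ≤ D := by exact_mod_cast hd.trans hdD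
  have l2 := Real.log_two_lt_d9
  have l2' := Real.log_two_gt_d9
  have hlδ : Real.log δ ≤ 0 := Real.log_nonpos hδ.le hδ1
  have hlε : 2 * Real.log 2 ≤ - Real.log ε := by
    rw [← Real.log_inv]
    have : 2 * Real.log 2 = Real.log 4 := by
      rw [show (4:ℝ) = 2^2 by norm_num, Real.log_pow]; norm_num
    rw [this]
    apply Real.log_le_log (by norm_num)
    rw [le_inv_comm₀ (by norm_num) hε]
    linarith
  have hlD : 0 ≤ Real.log D := Real.log_nonneg hD1
  have hΛ : Real.log ((D:ℝ) / (ε * δ)) = Real.log D - Real.log ε - Real.log δ := by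
    rw [Real.log_div (by positivity) (by positivity), Real.log_mul hε.ne' hδ.ne']; ring
  have hK1 : Real.log (2 ^ (D+2) / δ) = (D+2) * Real.log 2 - Real.log δ := by
    rw [Real.log_div (by positivity) hδ.ne', Real.log_pow]; push_cast; ring
  have hK2 : Real.log (2 * 2 ^ (2 ^ (d-1)) / δ) = (1 + 2^(d-1)) * Real.log 2 - Real.log δ := by
    rw [Real.log_div (by positivity) hδ.ne', Real.log_mul (by norm_num) (by positivity),
      Real.log_pow]; push_cast; ring
  have hpd : (2:ℝ) ^ d = 2 * 2 ^ (d-1) := by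
    rw [← pow_succ']; congr 1; omega
  have hp1 : (1:ℝ) ≤ 2 ^ (d-1) := one_le_pow₀ (by norm_num)
  have hΛ1 : 1 ≤ Real.log ((D:ℝ) / (ε * δ)) := by rw [hΛ]; linarith
  have hΛδ : - Real.log δ ≤ Real.log ((D:ℝ) / (ε * δ)) := by rw [hΛ]; linarith
  rw [hK1, hK2, hpd]
  generalize Real.log ((D:ℝ) / (ε * δ)) = L at *
  refine ⟨hΛ1, ?_, ?_, ?_, ?_⟩
  · rw [le_div_iff₀ hε]; nlinarith
  · refine div_le_div_of_nonneg_right ?_ hε.le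
    nlinarith [mul_nonneg (sub_nonneg.2 hD1) (sub_nonneg.2 hΛ1)]
  · apply div_nonneg _ hε.le
    nlinarith
  · refine div_le_div_of_nonneg_right ?_ hε.le
    nlinarith [mul_nonneg (sub_nonneg.2 hp1) (sub_nonneg.2 hΛ1)]

/-- Theorem 1, part 2: stochastic bound.
There is a universal constant `C` such that the following holds. Fix `δ ∈ (0,1]`.
If `(X_t,Y_t)_{t≥1}` satisfies the `d`-th order stochastic condition with parameter
`β* > 1/2`, and `α_{d-1,d} = (π*_{d-1} − π*_d)/2`, `α* = min {α_{d-1,d}, 2β*−1}`, then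
ContextTreeAdaHedge(D) with the prior `g_prop(h) = 2^{-2^{h+1}}` satisfies, with
probability at least `1−δ`,
`R_{T,d} ≤ C · 2^{2d} ((d²/α²_{d-1,d}) ln(d/(α²_{d-1,d} δ)) + (D·d/(α*)²) ln(D/(α* δ)))`. -/
theorem stochastic_regret_gprop :
    ∃ C : ℝ, 0 < C ∧
      ∀ (D d T : ℕ), 1 ≤ d → d ≤ D →
      ∀ δ : ℝ, 0 < δ → δ ≤ 1 →
      ∀ (Ω : Type) (_ : MeasurableSpace Ω) (μ : Measure Ω), IsProbabilityMeasure μ →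
      ∀ (X : ℕ → Ω → Fin D → Bool) (Y : ℕ → Ω → Bool),
        -- the pairs (X_t, Y_t) are measurable and i.i.d. across t
        (∀ t, Measurable fun ω => (X t ω, Y t ω)) →
        ProbabilityTheory.iIndepFun
          (fun t ω => (X t ω, Y t ω)) μ →
      ∀ (Q : (Fin D → Bool) → ℝ) (Pc : (Fin d → Bool) → Bool → ℝ),
        (∀ x, 0 ≤ Q x) → (∑ x : Fin D → Bool, Q x) = 1 →
        (∀ xd y, 0 ≤ Pc xd y) → (∀ xd : Fin d → Bool, (∑ y : Bool, Pc xd y) = 1) →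
        -- X_t ~ Q, and Y_t | X_t ~ P*(· | X_t(d))
        (∀ (t : ℕ) (x : Fin D → Bool) (y : Bool),
          μ {ω | X t ω = x ∧ Y t ω = y} = ENNReal.ofReal (Q x * Pc (trunc d x) y)) →
      -- the best predictor f* is unique, with β* = min_{x(d)} P*(f*(x(d)) | x(d)) > 1/2
      ∀ fstar : (Fin d → Bool) → Bool,
        (∀ (xd : Fin d → Bool) (y : Bool), y ≠ fstar xd → Pc xd y < Pc xd (fstar xd)) →
      ∀ bstar : ℝ, bstar = (⨅ xd : Fin d → Bool, Pc xd (fstar xd)) → 1 / 2 < bstar →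
      -- for h < d the h-th order model is strictly less predictive: π*_h > π*_d
        (∀ h, h < d → pistar d Q Pc d < pistar d Q Pc h) →
      ∀ αd αstar : ℝ,
        αd = (pistar d Q Pc (d - 1) - pistar d Q Pc d) / 2 →
        αstar = min αd (2 * bstar - 1) →
        ENNReal.ofReal (1 - δ) ≤
          μ {ω | regret gprop (fun s => X s ω) (fun s => Y s ω) d T ≤
              C * 2 ^ (2 * d) *
                (((d : ℝ) ^ 2 / αd ^ 2) * Real.log ((d : ℝ) / (αd ^ 2 * δ)) +
                  ((D : ℝ) * (d : ℝ) / αstar ^ 2) *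
                    Real.log ((D : ℝ) / (αstar * δ)))} := by
  refine ⟨900, by norm_num, ?_⟩
  intro D d T hd hdD δ hδ hδ1 Ω mΩ μ hμ X Y hmeas hind Q Pc hQ hQ1 hP hP1 hlaw fstar hf
    bstar hb hb2 hpi αd αstar hαd hαs
  -- basic facts on the parameters
  have hαd0 : 0 < αd := by
    have := hpi (d-1) (by omega)
    rw [hαd]; linarith
  have hαd1 : αd ≤ 1/4 := by
    have h1 := pistar_le_half d Q Pc hQ1 hP1 (d-1)
    have h2 := pistar_nonneg d Q Pc hQ hP d
    rw [hαd]; linarith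
  have hε : 0 < αstar := by rw [hαs]; exact lt_min hαd0 (by linarith)
  have hεd : αstar ≤ αd := by rw [hαs]; exact min_le_left _ _
  have hεb : αstar ≤ 2 * bstar - 1 := by rw [hαs]; exact min_le_right _ _
  have hε1 : αstar ≤ 1/4 := hεd.trans hαd1
  have hbx : ∀ xd, bstar ≤ Pc xd (fstar xd) := by
    intro xd; rw [hb]; exact ciInf_le (Set.finite_range _).bddBelow xd
  have hnot : ∀ xd, Pc xd (!fstar xd) = 1 - Pc xd (fstar xd) := by
    intro xd
    have := hP1 xd
    simp at this
    cases fstar xd <;> simp <;> linarith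
  have hfle : ∀ xd, Pc xd (!fstar xd) ≤ Pc xd (fstar xd) := by
    intro xd
    exact (hf xd _ (by simp)).le
  obtain ⟨hΛ1, hk1, hk1', hk2, hk2'⟩ := final_logs D d hd hdD δ αstar hδ hδ1 hε hε1
  -- the law of the pairs
  have hlaw' : ∀ t (a : (Fin D → Bool) × Bool),
      μ {ω | (X t ω, Y t ω) = a} = ENNReal.ofReal (Q a.1 * Pc (trunc d a.1) a.2) := by
    rintro t ⟨x, y⟩
    rw [← hlaw t x y]
    simp only [Prod.mk.injEq]
  have hp0 : ∀ a : (Fin D → Bool) × Bool, 0 ≤ Q a.1 * Pc (trunc d a.1) a.2 :=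
    fun a => mul_nonneg (hQ _) (hP _ _)
  have hp1 : ∑ a : (Fin D → Bool) × Bool, Q a.1 * Pc (trunc d a.1) a.2 = 1 := by
    rw [sum_bool_prod (fun x y => Q x * Pc (trunc d x) y), ← hQ1]
    refine Finset.sum_congr rfl fun x _ => ?_
    have := hP1 (trunc d x)
    simp at this
    rw [← mul_add, this, mul_one]
  -- concentration at the nodes
  have c1 := conc (ι := Σ h : Fin (D+1), (Fin h → Bool)) μ (fun t ω => (X t ω, Y t ω)) hmeas hind
    (fun a => Q a.1 * Pc (trunc d a.1) a.2) hlaw' hp0 hp1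
    (fun i a => if trunc i.1 a.1 = i.2 then
      (if a.2 ≠ fstar (trunc d a.1) then (1:ℝ) else -1) else 0)
    (fun i a => if trunc i.1 a.1 = i.2 then (1:ℝ) else 0) αstar hε hε1
    (by
      intro i a
      split_ifs <;> simp)
    (by
      intro i a
      split_ifs <;> simp)
    (by
      intro i
      rw [sum_bool_prod (fun x y => Q x * Pc (trunc d x) y * (if trunc i.1 x = i.2 then
        (if y ≠ fstar (trunc d x) then (1:ℝ) else -1) else 0)),
        sum_bool_prod (fun x y => Q x * Pc (trunc d x) y *
          (if trunc i.1 x = i.2 then (1:ℝ) else 0)), Finset.mul_sum]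
      refine Finset.sum_le_sum fun x _ => ?_
      by_cases hx : trunc i.1 x = i.2
      · simp only [hx, if_true]
        have h1 := hnot (trunc d x)
        have h2 := hbx (trunc d x)
        have h3 := hQ x
        have h4 := hP1 (trunc d x)
        simp at h4
        have h5 : Q x * (1 - 2 * Pc (trunc d x) (fstar (trunc d x))) ≤ Q x * (-αstar) :=
          mul_le_mul_of_nonneg_left (by linarith) h3
        have h6 : Q x * Pc (trunc d x) true + Q x * Pc (trunc d x) false = Q x := by
          rw [← mul_add, h4, mul_one]
        revert h1 h5
        cases fstar (trunc d x) <;> intro h1 h5 <;> simp at h1 h5 ⊢ <;> rw [h1] at h6 ⊢ <;> nlinarith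
      · simp [hx])
    (2 ^ (D+2) / δ) (by positivity) T
  -- concentration of the low-order experts
  have c2 := conc (ι := (Fin (d-1) → Bool) → Bool) μ (fun t ω => (X t ω, Y t ω)) hmeas hind
    (fun a => Q a.1 * Pc (trunc d a.1) a.2) hlaw' hp0 hp1
    (fun f a => (if a.2 ≠ fstar (trunc d a.1) then (1:ℝ) else 0) -
      (if a.2 ≠ f (trunc (d-1) a.1) then (1:ℝ) else 0))
    (fun _ _ => (1:ℝ)) αstar hε hε1
    (by intro i a; right; rfl)
    (by
      intro i a
      split_ifs <;> simp)
    (by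
      intro f
      simp only [mul_sub, Finset.sum_sub_distrib, mul_one]
      rw [err_eq, err_eq, hp1]
      have h1 := pistar_le_err d Q Pc (d-1) f
      have h2 := err_le_pistar d Q Pc hQ fstar hfle
      linarith)
    (2 * 2 ^ (2 ^ (d-1)) / δ) (by positivity) T
  have q1 : ((Fintype.card (Σ h : Fin (D+1), (Fin h → Bool)) : ℝ)) / (2 ^ (D+2) / δ) ≤ δ / 2 := by
    have := card_nodes D
    rw [div_le_iff₀ (by positivity)]
    have e : δ / 2 * (2 ^ (D+2) / δ) = (2:ℝ) ^ (D+1) := by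
      field_simp; ring
    rw [e]; exact this
  have q2 : ((Fintype.card ((Fin (d-1) → Bool) → Bool) : ℝ)) / (2 * 2 ^ (2 ^ (d-1)) / δ)
      ≤ δ / 2 := by
    simp only [Fintype.card_fun, Fintype.card_bool, Fintype.card_fin]
    push_cast
    rw [div_le_iff₀ (by positivity)]
    apply le_of_eq
    field_simp
  have c1' := c1.trans (ENNReal.ofReal_le_ofReal q1)
  have c2' := c2.trans (ENNReal.ofReal_le_ofReal q2)
  clear c1 c2
  set k1 := 2 * Real.log (2 ^ (D+2) / δ) / αstar with hk1def
  set k2 := 2 * Real.log (2 * 2 ^ (2 ^ (d-1)) / δ) / αstar with hk2def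
  set L := Real.log ((D:ℝ) / (αstar * δ)) with hLdef
  set bad1 := {ω | ¬ ∀ (i : Σ h : Fin (D+1), (Fin h → Bool)), ∀ t ≤ T, ∑ s ∈ Finset.Icc 1 t,
    (if trunc i.1 (X s ω) = i.2 then
      (if Y s ω ≠ fstar (trunc d (X s ω)) then (1:ℝ) else -1) else 0) ≤ k1 - αstar / 4 *
      ∑ s ∈ Finset.Icc 1 t, (if trunc i.1 (X s ω) = i.2 then (1:ℝ) else 0)} with hbad1
  set bad2 := {ω | ¬ ∀ (f : (Fin (d-1) → Bool) → Bool), ∀ t ≤ T, ∑ s ∈ Finset.Icc 1 t,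
    ((if Y s ω ≠ fstar (trunc d (X s ω)) then (1:ℝ) else 0) -
      (if Y s ω ≠ f (trunc (d-1) (X s ω)) then (1:ℝ) else 0)) ≤ k2 - αstar / 4 *
      ∑ s ∈ Finset.Icc 1 t, (1:ℝ)} with hbad2
  have c1'' : μ bad1 ≤ ENNReal.ofReal (δ/2) := c1'
  have c2'' : μ bad2 ≤ ENNReal.ofReal (δ/2) := c2'
  have hd1 : (1:ℝ) ≤ d := by exact_mod_cast hd
  have hD1 : (1:ℝ) ≤ D := by exact_mod_cast hd.trans hdD
  have hfirst : 0 ≤ ((d : ℝ) ^ 2 / αd ^ 2) * Real.log ((d : ℝ) / (αd ^ 2 * δ)) := by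
    apply mul_nonneg (by positivity)
    apply Real.log_nonneg
    rw [le_div_iff₀ (by positivity)]
    have : αd ^ 2 * δ ≤ 1 * 1 := by
      apply mul_le_mul _ hδ1 hδ.le zero_le_one
      nlinarith
    linarith
  have htarget : ∀ z : ℝ, 0 ≤ z → z ≤ 300 * (2 ^ d * D * L / αstar ^ 2) →
      (1 + 2 ^ (d+1)) * z ≤ 900 * 2 ^ (2 * d) *
                (((d : ℝ) ^ 2 / αd ^ 2) * Real.log ((d : ℝ) / (αd ^ 2 * δ)) +
                  ((D : ℝ) * (d : ℝ) / αstar ^ 2) * L) := by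
    intro z hz hzB
    have hp : (1:ℝ) ≤ 2 ^ d := one_le_pow₀ (by norm_num)
    calc (1 + 2 ^ (d+1)) * z ≤ (3 * 2 ^ d) * z := by
          apply mul_le_mul_of_nonneg_right _ hz
          rw [pow_succ]; linarith
      _ ≤ (3 * 2 ^ d) * (300 * (2 ^ d * D * L / αstar ^ 2)) := by gcongr
      _ = 900 * 2 ^ (2 * d) * ((D : ℝ) * 1 / αstar ^ 2 * L) := by
          rw [two_mul, pow_add]; ring
      _ ≤ 900 * 2 ^ (2 * d) * ((D : ℝ) * (d : ℝ) / αstar ^ 2 * L) := by gcongr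
      _ ≤ _ := by gcongr; linarith
  -- deterministic part on the good event
  have hgood : (bad1 ∪ bad2)ᶜ ⊆ {ω | regret gprop (fun s => X s ω) (fun s => Y s ω) d T ≤
              900 * 2 ^ (2 * d) *
                (((d : ℝ) ^ 2 / αd ^ 2) * Real.log ((d : ℝ) / (αd ^ 2 * δ)) +
                  ((D : ℝ) * (d : ℝ) / αstar ^ 2) * L)} := by
    intro ω hω
    rw [Set.mem_compl_iff, Set.mem_union, not_or] at hω
    have g1 := not_not.1 hω.1
    have g2 := not_not.1 hω.2
    have hreg := regret_le hdD (fun s => X s ω) (fun s => Y s ω) T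
    have hΔ0 : 0 ≤ Delta gprop (fun s => X s ω) (fun s => Y s ω) T := Delta_nonneg _ _ _
    refine le_trans hreg (htarget _ hΔ0 ?_)
    rcases Nat.eq_zero_or_pos T with hT | hT
    · subst hT
      have : Delta gprop (fun s => X s ω) (fun s => Y s ω) 0 = 0 := rfl
      rw [this]; positivity
    · have hB := Delta_bound hd hdD (fun s => X s ω) (fun s => Y s ω) fstar αstar k1 k2 hε hk1 hk2
        T hT
        (by
          intro h hdh hhD z t ht
          exact g1 ⟨⟨h, by omega⟩, z⟩ t ht)
        (by
          intro f t ht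
          have := g2 f t ht
          rw [Finset.sum_sub_distrib] at this
          simpa [Lexp] using this)
      exact final_quad D (2^d) L αstar k1 k2 _ hD1 (one_le_pow₀ (by norm_num)) hΛ1 hε hε1
        (by linarith) hk1' hk2' hΔ0 hB
  have hbad : μ (bad1 ∪ bad2) ≤ ENNReal.ofReal δ := by
    calc μ (bad1 ∪ bad2) ≤ μ bad1 + μ bad2 := measure_union_le _ _
      _ ≤ ENNReal.ofReal (δ/2) + ENNReal.ofReal (δ/2) := add_le_add c1'' c2''
      _ = ENNReal.ofReal δ := by
          rw [← ENNReal.ofReal_add (by positivity) (by positivity)]; congr 1; ring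
  refine le_trans ?_ (measure_mono hgood)
  rw [ENNReal.ofReal_sub _ hδ.le, ENNReal.ofReal_one, tsub_le_iff_right]
  calc (1 : ENNReal) = μ Set.univ := measure_univ.symm
    _ = μ ((bad1 ∪ bad2)ᶜ ∪ (bad1 ∪ bad2)) := by rw [Set.compl_union_self]
    _ ≤ μ (bad1 ∪ bad2)ᶜ + μ (bad1 ∪ bad2) := measure_union_le _ _
    _ ≤ _ := by gcongr

end CTAH
end
end

section
/- (High-probability separation of lower-order models) Let ε ∈ (0,1] and suppose (X_t,Y_t)_{t≥1} satisfies the d-th order stochastic condition. Set α_{h,d} = (π*_h − π*_d)/2 and t_low(h) = (32d/α²_{h,d}) ( d·2^h ln 2 + ln(64d/(ε α²_{h,d})) ). Then with probability at least 1 − ε/2, simultaneously for every h < d and every t ≥ t_low(h), the estimated unpredictabilities satisfy (π̂_h(t) − π̂_d(t)) · t ≥ α_{h,d} · t. -/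
open Finset MeasureTheory

noncomputable section

namespace CTAH

variable {D : ℕ}

/-- Cumulative contextual loss `L_{x,t,y} = ∑_{s=1}^t 1[X_s(h) = x, Y_s ≠ y]`. -/
def Lctx (X : ℕ → Fin D → Bool) (Y : ℕ → Bool) (h : ℕ)
    (x : Fin h → Bool) (t : ℕ) (y : Bool) : ℝ :=
  ∑ s ∈ Finset.Icc 1 t, if trunc h (X s) = x ∧ Y s ≠ y then 1 else 0

/-- Appearance frequency `N_t(x) = ∑_{s=1}^{t-1} 1[X_s(h) = x]` of a sub-context. -/
def Nctx (X : ℕ → Fin D → Bool) (h t : ℕ) (x : Fin h → Bool) : ℕ :=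
  ∑ s ∈ Finset.Icc 1 (t - 1), if trunc h (X s) = x then 1 else 0

/-- The gap `D_t(h) = L_{X_t(h),t,1−Y*_t} − L_{X_t(h),t,Y*_t}` between the wrong and the
true predictor at round `t`, for the current length-`h` sub-context; `Ys` is the true
best prediction sequence `Y*`. -/
def Dgap (X : ℕ → Fin D → Bool) (Y : ℕ → Bool) (Ys : ℕ → Bool) (h t : ℕ) : ℝ :=
  Lctx X Y h (trunc h (X t)) t (!(Ys t)) - Lctx X Y h (trunc h (X t)) t (Ys t)

/-- Scaled estimated unpredictability `t · π̂_h(t) = ∑_{x(h)} min_y L_{x(h),t,y}`. -/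
def hatPiT (X : ℕ → Fin D → Bool) (Y : ℕ → Bool) (h t : ℕ) : ℝ :=
  ∑ x : Fin h → Bool, min (Lctx X Y h x t false) (Lctx X Y h x t true)

/-- Unnormalized posterior weight of model order `h`:
`Q_t(h; η, g) = g(h) ∏_{x(h)} (∑_y e^{−η L_{x(h),t,y}})`. -/
def Qmod (X : ℕ → Fin D → Bool) (Y : ℕ → Bool) (g : ℕ → ℝ) (η : ℝ) (t h : ℕ) : ℝ :=
  g h * ∏ x : Fin h → Bool, (∑ y : Bool, Real.exp (-η * Lctx X Y h x t y))

/-- Posterior probability `q_t(h; η, g) = Q_t(h)/∑_{h'=0}^D Q_t(h')` that the algorithm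
selects the `h`-th order model. -/
def qmod (D : ℕ) (X : ℕ → Fin D → Bool) (Y : ℕ → Bool) (g : ℕ → ℝ) (η : ℝ)
    (t h : ℕ) : ℝ :=
  Qmod X Y g η t h / ∑ h' ∈ Finset.range (D + 1), Qmod X Y g η t h'

/-- The probability `w^{(h)}_{t,1−Y*_t}(η) = e^{−η D_t(h)}/(1 + e^{−η D_t(h)})` with which
the uniform-prior `h`-th order algorithm predicts the wrong label `1 − Y*_t`. -/
def wbad (X : ℕ → Fin D → Bool) (Y : ℕ → Bool) (Ys : ℕ → Bool) (η : ℝ) (h t : ℕ) : ℝ :=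
  Real.exp (-η * Dgap X Y Ys h t) / (1 + Real.exp (-η * Dgap X Y Ys h t))


/-- Zero-one loss of the predictor `f` acting on length-`h` sub-contexts. -/
def lossf {D h : ℕ} (f : (Fin h → Bool) → Bool) (p : (Fin D → Bool) × Bool) : ℝ :=
  if p.2 ≠ f (trunc h p.1) then 1 else 0

lemma lossf_nonneg {D h : ℕ} (f : (Fin h → Bool) → Bool) (p : (Fin D → Bool) × Bool) :
    0 ≤ lossf f p := by
  unfold lossf; split_ifs <;> norm_num

lemma lossf_le_one {D h : ℕ} (f : (Fin h → Bool) → Bool) (p : (Fin D → Bool) × Bool) :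
    lossf f p ≤ 1 := by
  unfold lossf; split_ifs <;> norm_num

lemma sum_Lctx {D h : ℕ} (X : ℕ → Fin D → Bool) (Y : ℕ → Bool) (t : ℕ)
    (f : (Fin h → Bool) → Bool) :
    ∑ x, Lctx X Y h x t (f x) = ∑ s ∈ Finset.Icc 1 t, lossf f (X s, Y s) := by
  unfold Lctx lossf
  rw [Finset.sum_comm]
  refine Finset.sum_congr rfl fun s _ => ?_
  rw [Finset.sum_eq_single (trunc h (X s))]
  · simp
  · intro b _ hb
    rw [if_neg]
    rintro ⟨h1, _⟩
    exact hb h1.symm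
  · simp

lemma hatPiT_le {D h : ℕ} (X : ℕ → Fin D → Bool) (Y : ℕ → Bool) (t : ℕ)
    (f : (Fin h → Bool) → Bool) :
    hatPiT X Y h t ≤ ∑ s ∈ Finset.Icc 1 t, lossf f (X s, Y s) := by
  rw [← sum_Lctx]
  refine Finset.sum_le_sum fun x _ => ?_
  cases f x
  · exact min_le_left _ _
  · exact min_le_right _ _

lemma exists_min_bool {β : Type*} (F : β → Bool → ℝ) :
    ∃ f : β → Bool, ∀ x, F x (f x) = min (F x false) (F x true) := by
  have : ∀ x, ∃ b, F x b = min (F x false) (F x true) := by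
    intro x
    rcases le_total (F x false) (F x true) with hle | hle
    · exact ⟨false, (min_eq_left hle).symm⟩
    · exact ⟨true, (min_eq_right hle).symm⟩
  choose f hf using this
  exact ⟨f, hf⟩

lemma exists_hatPiT {D h : ℕ} (X : ℕ → Fin D → Bool) (Y : ℕ → Bool) (t : ℕ) :
    ∃ f : (Fin h → Bool) → Bool,
      hatPiT X Y h t = ∑ s ∈ Finset.Icc 1 t, lossf f (X s, Y s) := by
  obtain ⟨f, hf⟩ := exists_min_bool (fun x y => Lctx X Y h x t y)
  refine ⟨f, ?_⟩
  rw [← sum_Lctx]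
  exact Finset.sum_congr rfl fun x _ => (hf x).symm

/-- Expected loss of a predictor. -/
def risk {D h : ℕ} (d : ℕ) (Q : (Fin D → Bool) → ℝ) (Pc : (Fin d → Bool) → Bool → ℝ)
    (f : (Fin h → Bool) → Bool) : ℝ :=
  ∑ p : (Fin D → Bool) × Bool, Q p.1 * Pc (trunc d p.1) p.2 * lossf f p

lemma risk_eq {D h : ℕ} (d : ℕ) (Q : (Fin D → Bool) → ℝ) (Pc : (Fin d → Bool) → Bool → ℝ)
    (f : (Fin h → Bool) → Bool) :
    risk d Q Pc f = ∑ xh, jointP d Q Pc h xh (!(f xh)) := by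
  unfold risk jointP lossf
  rw [Finset.sum_comm, Fintype.sum_prod_type]
  refine Finset.sum_congr rfl fun x _ => ?_
  rw [Finset.sum_eq_single (trunc h x)]
  · cases hfx : f (trunc h x) <;> simp [hfx]
  · intro b _ hb
    rw [if_neg (fun h1 => hb h1.symm)]
  · simp

lemma pistar_le_risk {D h : ℕ} (d : ℕ) (Q : (Fin D → Bool) → ℝ)
    (Pc : (Fin d → Bool) → Bool → ℝ) (f : (Fin h → Bool) → Bool) :
    pistar d Q Pc h ≤ risk d Q Pc f := by
  rw [risk_eq]
  refine Finset.sum_le_sum fun x _ => ?_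
  cases f x
  · exact min_le_right _ _
  · exact min_le_left _ _

lemma exists_risk {D : ℕ} (h d : ℕ) (Q : (Fin D → Bool) → ℝ)
    (Pc : (Fin d → Bool) → Bool → ℝ) :
    ∃ f : (Fin h → Bool) → Bool, risk d Q Pc f = pistar d Q Pc h := by
  obtain ⟨f, hf⟩ := exists_min_bool (fun x y => jointP d Q Pc h x y)
  refine ⟨fun x => !(f x), ?_⟩
  rw [risk_eq]
  exact Finset.sum_congr rfl fun x _ => by simpa using hf x

lemma risk_nonneg {D h : ℕ} (d : ℕ) (Q : (Fin D → Bool) → ℝ) (Pc : (Fin d → Bool) → Bool → ℝ)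
    (hQ0 : ∀ x, 0 ≤ Q x) (hP0 : ∀ xd y, 0 ≤ Pc xd y)
    (f : (Fin h → Bool) → Bool) : 0 ≤ risk d Q Pc f :=
  Finset.sum_nonneg fun p _ => mul_nonneg (mul_nonneg (hQ0 _) (hP0 _ _)) (lossf_nonneg _ _)

lemma risk_le_one {D h : ℕ} (d : ℕ) (Q : (Fin D → Bool) → ℝ) (Pc : (Fin d → Bool) → Bool → ℝ)
    (hQ0 : ∀ x, 0 ≤ Q x) (hQ1 : (∑ x : Fin D → Bool, Q x) = 1)
    (hP0 : ∀ xd y, 0 ≤ Pc xd y) (hP1 : ∀ xd : Fin d → Bool, (∑ y : Bool, Pc xd y) = 1)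
    (f : (Fin h → Bool) → Bool) : risk d Q Pc f ≤ 1 := by
  have h1 : risk d Q Pc f ≤ ∑ p : (Fin D → Bool) × Bool, Q p.1 * Pc (trunc d p.1) p.2 :=
    Finset.sum_le_sum fun p _ =>
      mul_le_of_le_one_right (mul_nonneg (hQ0 _) (hP0 _ _)) (lossf_le_one _ _)
  refine h1.trans (le_of_eq ?_)
  rw [Fintype.sum_prod_type, ← hQ1]
  refine Finset.sum_congr rfl fun x _ => ?_
  have := hP1 (trunc d x)
  simp only
  rw [← Finset.mul_sum, this, mul_one]

lemma integral_loss {D h d : ℕ} {Ω : Type} [MeasurableSpace Ω] (μ : Measure Ω)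
    [IsProbabilityMeasure μ] (X : Ω → Fin D → Bool) (Y : Ω → Bool)
    (hmeas : Measurable fun ω => (X ω, Y ω))
    (Q : (Fin D → Bool) → ℝ) (Pc : (Fin d → Bool) → Bool → ℝ)
    (hQ0 : ∀ x, 0 ≤ Q x) (hP0 : ∀ xd y, 0 ≤ Pc xd y)
    (hlaw : ∀ (x : Fin D → Bool) (y : Bool),
      μ {ω | X ω = x ∧ Y ω = y} = ENNReal.ofReal (Q x * Pc (trunc d x) y))
    (f : (Fin h → Bool) → Bool) :
    ∫ ω, lossf f (X ω, Y ω) ∂μ = risk d Q Pc f := by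
  have : IsProbabilityMeasure (μ.map fun ω => (X ω, Y ω)) :=
    Measure.isProbabilityMeasure_map hmeas.aemeasurable
  rw [← integral_map (f := lossf f) hmeas.aemeasurable
    (measurable_of_finite _).aestronglyMeasurable]
  rw [integral_fintype (Integrable.of_finite)]
  refine Finset.sum_congr rfl fun p _ => ?_
  rw [smul_eq_mul, map_measureReal_apply hmeas (measurableSet_singleton _)]
  congr 1
  have hset : (fun ω => (X ω, Y ω)) ⁻¹' {p} = {ω | X ω = p.1 ∧ Y ω = p.2} := by
    ext ω; simp [Prod.ext_iff]
  rw [hset, measureReal_def, hlaw,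
    ENNReal.toReal_ofReal (mul_nonneg (hQ0 _) (hP0 _ _))]

lemma hoeff {D h d : ℕ} {Ω : Type} [MeasurableSpace Ω] (μ : Measure Ω)
    [IsProbabilityMeasure μ] (X : ℕ → Ω → Fin D → Bool) (Y : ℕ → Ω → Bool)
    (hmeas : ∀ t, Measurable fun ω => (X t ω, Y t ω))
    (hindep : ProbabilityTheory.iIndepFun (fun t ω => (X t ω, Y t ω)) μ)
    (Q : (Fin D → Bool) → ℝ) (Pc : (Fin d → Bool) → Bool → ℝ)
    (hQ0 : ∀ x, 0 ≤ Q x) (hP0 : ∀ xd y, 0 ≤ Pc xd y)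
    (hlaw : ∀ (t : ℕ) (x : Fin D → Bool) (y : Bool),
      μ {ω | X t ω = x ∧ Y t ω = y} = ENNReal.ofReal (Q x * Pc (trunc d x) y))
    (f : (Fin h → Bool) → Bool) (g : (Fin d → Bool) → Bool) (α : ℝ) (hα : 0 ≤ α)
    (hgap : risk d Q Pc g + 2 * α ≤ risk d Q Pc f) (t : ℕ) :
    μ {ω | (∑ s ∈ Finset.Icc 1 t, lossf f (X s ω, Y s ω)) -
        (∑ s ∈ Finset.Icc 1 t, lossf g (X s ω, Y s ω)) < α * t} ≤
      ENNReal.ofReal (Real.exp (-(α ^ 2 / 2) * t)) := by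
  set Z : (Fin D → Bool) × Bool → ℝ := fun p => lossf g p - lossf f p with hZ
  have hZm : Measurable Z := measurable_of_finite _
  have hint : ∀ s, ∫ ω, Z (X s ω, Y s ω) ∂μ = risk d Q Pc g - risk d Q Pc f := by
    intro s
    have hi : ∀ (k : ℕ) (f : (Fin k → Bool) → Bool),
        Integrable (fun ω => lossf f (X s ω, Y s ω)) μ := by
      intro k f
      refine Integrable.of_mem_Icc 0 1
        (((measurable_of_finite (lossf f)).comp (hmeas s)).aemeasurable) ?_
      exact ae_of_all _ fun ω => ⟨lossf_nonneg _ _, lossf_le_one _ _⟩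
    simp only [hZ]
    rw [integral_sub (hi _ g) (hi _ f),
      integral_loss μ (X s) (Y s) (hmeas s) Q Pc hQ0 hP0 (hlaw s),
      integral_loss μ (X s) (Y s) (hmeas s) Q Pc hQ0 hP0 (hlaw s)]
  set m := risk d Q Pc g - risk d Q Pc f with hm
  have hind2 : ProbabilityTheory.iIndepFun (fun s ω => Z (X s ω, Y s ω) - m) μ :=
    hindep.comp (fun _ p => Z p - m) (fun _ => measurable_of_finite _)
  have hsub : ∀ s ∈ Finset.Icc 1 t,
      ProbabilityTheory.HasSubgaussianMGF (fun ω => Z (X s ω, Y s ω) - m) 1 μ := by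
    intro s _
    have := ProbabilityTheory.hasSubgaussianMGF_of_mem_Icc (μ := μ) (a := -1) (b := 1)
      (X := fun ω => Z (X s ω, Y s ω)) (hZm.comp (hmeas s)).aemeasurable
      (ae_of_all _ fun ω => by
        have h1 := lossf_nonneg f (X s ω, Y s ω)
        have h2 := lossf_nonneg g (X s ω, Y s ω)
        have h3 := lossf_le_one f (X s ω, Y s ω)
        have h4 := lossf_le_one g (X s ω, Y s ω)
        constructor <;> simp only [hZ] <;> linarith)
    rw [hint s] at this
    convert this using 1
    ext
    norm_num
  have key := ProbabilityTheory.HasSubgaussianMGF.measure_sum_ge_le_of_iIndepFun hind2 hsub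
    (ε := α * t) (by positivity)
  have hexp : Real.exp (-(α * t) ^ 2 / (2 * ((∑ i ∈ Finset.Icc 1 t, (1 : NNReal) : NNReal) : ℝ)))
      = Real.exp (-(α ^ 2 / 2) * t) := by
    congr 1
    rcases Nat.eq_zero_or_pos t with rfl | ht
    · simp
    · have : (t : ℝ) ≠ 0 := by positivity
      simp
      field_simp
  rw [hexp] at key
  refine le_trans (measure_mono ?_) (ENNReal.le_ofReal_iff_toReal_le (measure_ne_top _ _)
    (Real.exp_pos _).le |>.2 key)
  intro ω hω
  simp only [Set.mem_setOf_eq] at hω ⊢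
  simp only [hZ, Finset.sum_sub_distrib, Finset.sum_const, Nat.card_Icc, nsmul_eq_mul,
    Nat.add_sub_cancel]
  have ht : (0 : ℝ) ≤ t := Nat.cast_nonneg t
  nlinarith

lemma tail_sum (x : ℝ) (hx0 : 0 < x) (hx1 : x ≤ 1) (C : ℝ) (hC : 0 ≤ C) (T : ℕ) :
    ∑' k : ℕ, ENNReal.ofReal (C * Real.exp (-x * ((T + k : ℕ) : ℝ))) ≤
      ENNReal.ofReal (C * (2 / x) * Real.exp (-x * T)) := by
  have hr1 : Real.exp (-x) < 1 := by simpa using hx0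
  have hgeo := hasSum_geometric_of_lt_one (Real.exp_pos (-x)).le hr1
  have heq : ∀ k : ℕ, C * Real.exp (-x * ((T + k : ℕ) : ℝ)) =
      C * Real.exp (-x * T) * Real.exp (-x) ^ k := by
    intro k
    rw [← Real.exp_nat_mul, mul_assoc, ← Real.exp_add]
    congr 2
    push_cast; ring
  simp_rw [heq]
  have hs := hgeo.mul_left (C * Real.exp (-x * T))
  rw [← ENNReal.ofReal_tsum_of_nonneg (fun k => by positivity) hs.summable, hs.tsum_eq]
  apply ENNReal.ofReal_le_ofReal
  have h1 : (1 - Real.exp (-x))⁻¹ ≤ 2 / x := by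
    have h2 : Real.exp (-x) ≤ 1 - x / 2 := by
      rw [Real.exp_neg, inv_le_comm₀ (Real.exp_pos _) (by linarith)]
      have := Real.add_one_le_exp x
      refine le_trans ?_ this
      rw [inv_le_iff_one_le_mul₀ (by linarith)]
      nlinarith
    rw [show 2 / x = (x / 2)⁻¹ by simp]
    exact inv_anti₀ (by linarith) (by linarith)
  calc C * Real.exp (-x * T) * (1 - Real.exp (-x))⁻¹
      ≤ C * Real.exp (-x * T) * (2 / x) := by gcongr
    _ = _ := by ring

lemma arith (d h : ℕ) (hd : 1 ≤ d) (ε α τ T : ℝ) (hε0 : 0 < ε) (hε1 : ε ≤ 1)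
    (hα0 : 0 < α) (hα1 : α ≤ 1)
    (hτ : τ = (32 * (d : ℝ) / α ^ 2) *
        ((d : ℝ) * 2 ^ h * Real.log 2 + Real.log (64 * (d : ℝ) / (ε * α ^ 2))))
    (hT : τ ≤ T) :
    (2 : ℝ) ^ (2 ^ h) * (2 / (α ^ 2 / 2)) * Real.exp (-(α ^ 2 / 2) * T) ≤ ε / (2 * d) := by
  have hd' : (1 : ℝ) ≤ d := by exact_mod_cast hd
  have hl2 : 0 < Real.log 2 := Real.log_pos (by norm_num)
  have hα2 : α ^ 2 ≤ 1 := pow_le_one₀ hα0.le hα1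
  have hεα : ε * α ^ 2 ≤ 1 := mul_le_one₀ hε1 (by positivity) hα2
  have hB : 0 ≤ Real.log (64 * (d : ℝ) / (ε * α ^ 2)) := by
    apply Real.log_nonneg
    rw [le_div_iff₀ (by positivity)]
    linarith
  set B := Real.log (64 * (d : ℝ) / (ε * α ^ 2)) with hBdef
  have h1 : (2 : ℝ) ^ h * Real.log 2 + B ≤ α ^ 2 / 2 * T := by
    have h2 : α ^ 2 / 2 * τ = 16 * d * (d * (2 ^ h * Real.log 2) + B) := by
      rw [hτ]; field_simp; ring
    have h3 : α ^ 2 / 2 * τ ≤ α ^ 2 / 2 * T := by gcongr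
    have hp : 0 ≤ (2 : ℝ) ^ h * Real.log 2 := by positivity
    have h4 : (2 : ℝ) ^ h * Real.log 2 ≤ d * (2 ^ h * Real.log 2) :=
      le_mul_of_one_le_left hp hd'
    have h5 : d * (2 ^ h * Real.log 2) + B ≤ 16 * d * (d * (2 ^ h * Real.log 2) + B) :=
      le_mul_of_one_le_left (by linarith) (by linarith)
    linarith
  have h6 : Real.exp (-(α ^ 2 / 2) * T) ≤ Real.exp (-((2 : ℝ) ^ h * Real.log 2) + -B) := by
    apply Real.exp_le_exp.2; linarith
  have h7 : Real.exp (-((2 : ℝ) ^ h * Real.log 2) + -B) =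
      ((2 : ℝ) ^ (2 ^ h))⁻¹ * (ε * α ^ 2 / (64 * d)) := by
    rw [Real.exp_add, Real.exp_neg, Real.exp_neg, hBdef, Real.exp_log (by positivity), inv_div]
    congr 2
    have : (2 : ℝ) ^ h * Real.log 2 = ((2 ^ h : ℕ) : ℝ) * Real.log 2 := by push_cast; rfl
    rw [this, Real.exp_nat_mul, Real.exp_log (by norm_num)]
  calc _ ≤ (2 : ℝ) ^ (2 ^ h) * (2 / (α ^ 2 / 2)) *
        (((2 : ℝ) ^ (2 ^ h))⁻¹ * (ε * α ^ 2 / (64 * d))) := by rw [← h7]; gcongr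
    _ = ε / (16 * d) := by field_simp; norm_num
    _ ≤ ε / (2 * d) := by gcongr; norm_num

/-- High-probability separation of lower-order models.
Let `ε ∈ (0,1]` and suppose `(X_t,Y_t)_{t≥1}` satisfies the `d`-th order stochastic
condition. Set `α_{h,d} = (π*_h − π*_d)/2` and
`t_low(h) = (32d/α²_{h,d})(d·2^h ln 2 + ln(64d/(ε α²_{h,d})))`. Then with probability at
least `1 − ε/2`, simultaneously for every `h < d` and every `t ≥ t_low(h)`,
`(π̂_h(t) − π̂_d(t)) · t ≥ α_{h,d} · t`. -/
theorem high_probability_lower_order_separation (D d : ℕ) (hd : d ≤ D)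
    (ε : ℝ) (hε0 : 0 < ε) (hε1 : ε ≤ 1)
    (Ω : Type) [MeasurableSpace Ω] (μ : Measure Ω) [IsProbabilityMeasure μ]
    (X : ℕ → Ω → Fin D → Bool) (Y : ℕ → Ω → Bool)
    -- the pairs (X_t, Y_t) are measurable and i.i.d. across t
    (hmeas : ∀ t, Measurable fun ω => (X t ω, Y t ω))
    (hindep : ProbabilityTheory.iIndepFun
      (fun t ω => (X t ω, Y t ω)) μ)
    (Q : (Fin D → Bool) → ℝ) (Pc : (Fin d → Bool) → Bool → ℝ)
    (hQ0 : ∀ x, 0 ≤ Q x) (hQ1 : (∑ x : Fin D → Bool, Q x) = 1)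
    (hP0 : ∀ xd y, 0 ≤ Pc xd y) (hP1 : ∀ xd : Fin d → Bool, (∑ y : Bool, Pc xd y) = 1)
    -- X_t ~ Q, and Y_t | X_t ~ P*(· | X_t(d))
    (hlaw : ∀ (t : ℕ) (x : Fin D → Bool) (y : Bool),
      μ {ω | X t ω = x ∧ Y t ω = y} = ENNReal.ofReal (Q x * Pc (trunc d x) y))
    -- for h < d the h-th order model is strictly less predictive: π*_h > π*_d
    (hsep : ∀ h, h < d → pistar d Q Pc d < pistar d Q Pc h)
    (αhd : ℕ → ℝ) (hαhd : ∀ h, αhd h = (pistar d Q Pc h - pistar d Q Pc d) / 2)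
    (tlow : ℕ → ℝ)
    (htlow : ∀ h : ℕ, tlow h =
      (32 * (d : ℝ) / (αhd h) ^ 2) *
        ((d : ℝ) * 2 ^ h * Real.log 2 + Real.log (64 * (d : ℝ) / (ε * (αhd h) ^ 2)))) :
    ENNReal.ofReal (1 - ε / 2) ≤
      μ {ω | ∀ h t : ℕ, h < d → tlow h ≤ (t : ℝ) →
          αhd h * (t : ℝ) ≤
            hatPiT (fun s => X s ω) (fun s => Y s ω) h t -
              hatPiT (fun s => X s ω) (fun s => Y s ω) d t} := by
  set G : Set Ω := {ω | ∀ h t : ℕ, h < d → tlow h ≤ (t : ℝ) →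
          αhd h * (t : ℝ) ≤
            hatPiT (fun s => X s ω) (fun s => Y s ω) h t -
              hatPiT (fun s => X s ω) (fun s => Y s ω) d t} with hG
  obtain ⟨g, hg⟩ := exists_risk d d Q Pc
  let bad : (h : ℕ) → ((Fin h → Bool) → Bool) → ℕ → Set Ω := fun h f t =>
    {ω | (∑ s ∈ Finset.Icc 1 t, lossf f (X s ω, Y s ω)) -
        (∑ s ∈ Finset.Icc 1 t, lossf g (X s ω, Y s ω)) < αhd h * t}
  have hcover : Gᶜ ⊆ ⋃ h ∈ Finset.range d, ⋃ k : ℕ, ⋃ f ∈ (Finset.univ :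
      Finset ((Fin h → Bool) → Bool)), bad h f (⌈tlow h⌉₊ + k) := by
    intro ω hω
    simp only [hG, Set.mem_compl_iff, Set.mem_setOf_eq, not_forall, not_le] at hω
    obtain ⟨h, t, hh, ht, hlt⟩ := hω
    obtain ⟨f, hf⟩ := exists_hatPiT (h := h) (fun s => X s ω) (fun s => Y s ω) t
    have hle := hatPiT_le (fun s => X s ω) (fun s => Y s ω) t g
    obtain ⟨k, hk⟩ := Nat.exists_eq_add_of_le (Nat.ceil_le.2 ht)
    simp only [Set.mem_iUnion]
    refine ⟨h, Finset.mem_range.2 hh, k, f, Finset.mem_univ _, ?_⟩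
    rw [← hk]
    simp only [bad, Set.mem_setOf_eq]
    linarith
  have hone : ∀ h ∈ Finset.range d, μ (⋃ k : ℕ, ⋃ f ∈ (Finset.univ :
      Finset ((Fin h → Bool) → Bool)), bad h f (⌈tlow h⌉₊ + k)) ≤
      ENNReal.ofReal (ε / (2 * d)) := by
    intro h hh
    have hh := Finset.mem_range.1 hh
    have hα0 : 0 < αhd h := by rw [hαhd]; linarith [hsep h hh]
    have hα1 : αhd h ≤ 1 := by
      have h1 := (pistar_le_risk d Q Pc (fun _ : Fin h → Bool => true)).trans
        (risk_le_one d Q Pc hQ0 hQ1 hP0 hP1 _)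
      have h2 := risk_nonneg d Q Pc hQ0 hP0 g
      rw [hαhd]; linarith
    have hα2 : (αhd h) ^ 2 ≤ 1 := pow_le_one₀ hα0.le hα1
    have hk : ∀ k : ℕ, μ (⋃ f ∈ (Finset.univ :
        Finset ((Fin h → Bool) → Bool)), bad h f (⌈tlow h⌉₊ + k)) ≤
        ENNReal.ofReal ((2 : ℝ) ^ (2 ^ h) *
          Real.exp (-((αhd h) ^ 2 / 2) * ((⌈tlow h⌉₊ + k : ℕ) : ℝ))) := by
      intro k
      refine (measure_biUnion_finset_le _ _).trans ?_
      refine (Finset.sum_le_sum (g := fun _ => ENNReal.ofReal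
        (Real.exp (-((αhd h) ^ 2 / 2) * ((⌈tlow h⌉₊ + k : ℕ) : ℝ)))) fun f _ => ?_).trans ?_
      · refine hoeff μ X Y hmeas hindep Q Pc hQ0 hP0 hlaw f g (αhd h) hα0.le ?_ _
        have := pistar_le_risk d Q Pc f
        rw [hg, hαhd]; linarith
      · rw [Finset.sum_const, ENNReal.ofReal_mul (by positivity)]
        simp
    refine (measure_iUnion_le _).trans ((ENNReal.tsum_le_tsum hk).trans ?_)
    refine (tail_sum _ (by positivity) (by linarith) _ (by positivity) _).trans ?_
    exact ENNReal.ofReal_le_ofReal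
      (arith d h (by omega) ε (αhd h) (tlow h) _ hε0 hε1 hα0 hα1 (htlow h) (Nat.le_ceil _))
  have hbad : μ Gᶜ ≤ ENNReal.ofReal (ε / 2) := by
    refine (measure_mono hcover).trans ((measure_biUnion_finset_le _ _).trans
      ((Finset.sum_le_sum hone).trans ?_))
    rw [Finset.sum_const, Finset.card_range, nsmul_eq_mul, ← ENNReal.ofReal_natCast,
      ← ENNReal.ofReal_mul (by positivity)]
    apply ENNReal.ofReal_le_ofReal
    rcases Nat.eq_zero_or_pos d with h0 | h0
    · rw [h0]; simp; positivity
    · have : (d : ℝ) ≠ 0 := by positivity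
      apply le_of_eq; field_simp
  have huniv : (1 : ENNReal) ≤ μ G + μ Gᶜ := by
    rw [← measure_univ (μ := μ), ← Set.union_compl_self G]
    exact measure_union_le _ _
  rw [ENNReal.ofReal_sub _ (by positivity), ENNReal.ofReal_one, tsub_le_iff_right]
  exact huniv.trans (by gcongr)

end CTAH
end
end
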